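/- arXiv:2003.11002 — 2 statements merged into one kernel-verified Lean document; each statement's English description precedes it below -/
import Mathlib

section
/- Let X be a real Banach space, let 1 ≤ k ≤ n, and let P be a continuous polynomial of degree at most n−k on X such that |P(x)|² ≤ M_k(‖x‖) for every x ∈ X with ‖x‖ < 1, where M_k(t) = (T_n^{(k)}(t))² + (S_n^{(k)}(t))². Then |P(x)| ≤ T_n^{(k)}(1) = n²(n²−1²)⋯(n²−(k−1)²)/(1·3⋯(2k−1)) for every x ∈ X with ‖x‖ ≤ 1. -/
open Metric

/-- `M_k(t) = (T_n^{(k)}(t))^2 + (S_n^{(k)}(t))^2`, where `T_n(t) = cos (n arccos t)` and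
`S_n(t) = sin (n arccos t)` on `(-1, 1)`, and the superscript `(k)` denotes the `k`-th
derivative of these functions. -/
noncomputable def chebM (n k : ℕ) (t : ℝ) : ℝ :=
  (iteratedDeriv k (fun s : ℝ => Real.cos (n * Real.arccos s)) t) ^ 2 +
  (iteratedDeriv k (fun s : ℝ => Real.sin (n * Real.arccos s)) t) ^ 2

/-- `T_n^{(k)}(1)`: the `k`-th derivative of the `n`-th Chebyshev polynomial of the
first kind, evaluated at `1`. -/
noncomputable def chebTDerivOne (n k : ℕ) : ℝ :=
  (Polynomial.derivative^[k] (Polynomial.Chebyshev.T ℝ (n : ℤ))).eval 1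

/-!
By Chebyshev's equation, `M_k` is a polynomial in `w = 1 - x²` with nonnegative coefficients
divided by `w ^ (2k - 1)`, so `M_k(x)` increases with `|x|`. Hence for `‖x‖ ≤ 1` the one-variable
polynomial `p(t) = P(t x)` satisfies `p(t)² ≤ M_k(t)` on `(-1, 1)`. The sign of the Wronskian of
`T_n^{(k)}` and `S_n^{(k)}` and Rolle's theorem show that `S_n^{(k)}` has at least `n - k + 1`
zeros in `(-1, 1)` at which `T_n^{(k)}` alternates in sign. There `M_k = (T_n^{(k)})²`, so `|p|`
is at most `|T_n^{(k)}|`; as the fundamental polynomials of Lagrange interpolation also alternate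
in sign to the right of all the nodes, `|p(1)| ≤ T_n^{(k)}(1)`.
-/

section PolynomialComparison

open Polynomial

lemma neg_one_pow_mul_eval_basis_nonneg {K : Type*} [Field K] [LinearOrder K]
    [IsStrictOrderedRing K] {m : ℕ} {x : Fin (m + 1) → K} (hx : StrictAnti x)
    (i : Fin (m + 1)) {t : K} (ht : x 0 ≤ t) :
    0 ≤ (-1) ^ (i : ℕ) * (Lagrange.basis Finset.univ x i).eval t := by
  have hsign : (-1 : K) ^ (i : ℕ) = ∏ j ∈ Finset.univ.erase i, if j < i then -1 else 1 := by
    have hbelow : (Finset.univ.erase i).filter (· < i) = Finset.Iio i := by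
      ext j
      simpa using ne_of_lt
    rw [Finset.prod_ite, Finset.prod_const, Finset.prod_const_one, mul_one, hbelow, Fin.card_Iio]
  rw [hsign, Lagrange.basis, eval_prod, ← Finset.prod_mul_distrib]
  refine Finset.prod_nonneg fun j hj ↦ ?_
  have htj : 0 ≤ t - x j := sub_nonneg.2 ((hx.antitone (Fin.zero_le j)).trans ht)
  simp only [Lagrange.basisDivisor, eval_mul, eval_C, eval_sub, eval_X, ← mul_assoc]
  refine mul_nonneg ?_ htj
  rcases lt_or_gt_of_ne (Finset.ne_of_mem_erase hj) with hji | hij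
  · rw [if_pos hji, neg_one_mul, neg_nonneg, inv_nonpos, sub_nonpos]
    exact (hx hji).le
  · rw [if_neg hij.not_gt, one_mul, inv_nonneg, sub_nonneg]
    exact (hx hij).le

lemma eval_eq_sum_eval_mul_eval_basis {K ι : Type*} [Field K] [Fintype ι] [DecidableEq ι]
    {x : ι → K} (hx : Function.Injective x) {p : K[X]} (hp : p.degree < Fintype.card ι) (t : K) :
    p.eval t = ∑ i, p.eval (x i) * (Lagrange.basis Finset.univ x i).eval t := by
  conv_lhs => rw [Lagrange.eq_interpolate (s := Finset.univ) hx.injOn hp]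
  simp only [Lagrange.interpolate_apply, eval_finsetSum, eval_mul, eval_C]

theorem abs_eval_le_eval_of_alternating {K : Type*} [Field K] [LinearOrder K]
    [IsStrictOrderedRing K] {m : ℕ} {x : Fin (m + 1) → K} (hx : StrictAnti x) {p q : K[X]}
    (hp : p.degree < (m + 1 : ℕ)) (hq : q.degree < (m + 1 : ℕ))
    (hpq : ∀ i, |p.eval (x i)| ≤ (-1) ^ (i : ℕ) * q.eval (x i)) {t : K} (ht : x 0 ≤ t) :
    |p.eval t| ≤ q.eval t := by
  rw [eval_eq_sum_eval_mul_eval_basis hx.injective (by simpa using hp),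
    eval_eq_sum_eval_mul_eval_basis hx.injective (by simpa using hq)]
  refine (Finset.abs_sum_le_sum_abs _ _).trans (Finset.sum_le_sum fun i _ ↦ ?_)
  have habs : |(Lagrange.basis Finset.univ x i).eval t|
      = (-1) ^ (i : ℕ) * (Lagrange.basis Finset.univ x i).eval t := by
    rw [← abs_of_nonneg (neg_one_pow_mul_eval_basis_nonneg hx i ht), abs_mul, abs_neg_one_pow,
      one_mul]
  calc |p.eval (x i) * (Lagrange.basis Finset.univ x i).eval t|
      = |p.eval (x i)| * ((-1) ^ (i : ℕ) * (Lagrange.basis Finset.univ x i).eval t) := by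
        rw [abs_mul, habs]
    _ ≤ (-1) ^ (i : ℕ) * q.eval (x i) *
          ((-1) ^ (i : ℕ) * (Lagrange.basis Finset.univ x i).eval t) :=
        mul_le_mul_of_nonneg_right (hpq i) (neg_one_pow_mul_eval_basis_nonneg hx i ht)
    _ = q.eval (x i) * (Lagrange.basis Finset.univ x i).eval t := by
        rw [mul_mul_mul_comm, ← pow_add, Even.neg_one_pow ⟨_, rfl⟩, one_mul]

lemma antitoneOn_eval_div_pow {K : Type*} [Field K] [LinearOrder K] [IsStrictOrderedRing K]
    {p : K[X]} {N : ℕ} (hp : ∀ j, 0 ≤ p.coeff j) (hN : p.natDegree ≤ N) :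
    AntitoneOn (fun w ↦ p.eval w / w ^ N) (Set.Ioi 0) := by
  have hexpand : ∀ w ∈ Set.Ioi (0 : K),
      p.eval w / w ^ N = ∑ j ∈ Finset.range (N + 1), p.coeff j * (w ^ (N - j))⁻¹ := by
    intro w hw
    rw [eval_eq_sum_range' (Nat.lt_succ_of_le hN), Finset.sum_div]
    refine Finset.sum_congr rfl fun j hj ↦ ?_
    rw [mul_div_assoc, pow_sub₀ w (ne_of_gt hw) (Finset.mem_range_succ_iff.1 hj), mul_inv,
      inv_inv, div_eq_inv_mul]
  intro v hv w hw hvw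
  rw [Set.mem_Ioi] at hv hw
  simp only [hexpand v hv, hexpand w hw]
  gcongr with j
  exact hp j

lemma coeff_natCast_mul_sub_X_mul_derivative {R : Type*} [CommRing R] (p : R[X]) (N j : ℕ) :
    ((N : R[X]) * p - X * derivative p).coeff j = (N - j) * p.coeff j := by
  rw [coeff_sub, ← C_eq_natCast, coeff_C_mul]
  cases j with
  | zero => simp
  | succ j =>
    rw [coeff_X_mul, coeff_derivative]
    push_cast
    ring

lemma natDegree_natCast_mul_sub_X_mul_derivative_le {R : Type*} [CommRing R] (p : R[X]) (N : ℕ) :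
    ((N : R[X]) * p - X * derivative p).natDegree ≤ p.natDegree :=
  natDegree_le_iff_coeff_eq_zero.2 fun j hj ↦ by
    rw [coeff_natCast_mul_sub_X_mul_derivative, coeff_eq_zero_of_natDegree_lt hj, mul_zero]

lemma coeff_natCast_mul_sub_X_mul_derivative_nonneg {R : Type*} [CommRing R] [LinearOrder R]
    [IsStrictOrderedRing R] {p : R[X]} {N : ℕ} (hp : ∀ j, 0 ≤ p.coeff j) (hN : p.natDegree ≤ N)
    (j : ℕ) : 0 ≤ ((N : R[X]) * p - X * derivative p).coeff j := by
  rw [coeff_natCast_mul_sub_X_mul_derivative]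
  rcases le_or_gt j N with hjN | hNj
  · exact mul_nonneg (sub_nonneg.2 (Nat.cast_le.2 hjN)) (hp j)
  · rw [coeff_eq_zero_of_natDegree_lt (hN.trans_lt hNj), mul_zero]

lemma derivative_surjective {K : Type*} [Field K] [CharZero K] :
    Function.Surjective (derivative : K[X] → K[X]) := by
  intro q
  refine ⟨q.sum fun j a ↦ monomial (j + 1) (a / (j + 1)), ?_⟩
  conv_rhs => rw [← q.sum_monomial_eq]
  simp only [Polynomial.sum, derivative_sum, derivative_monomial, Nat.add_sub_cancel, Nat.cast_add,
    Nat.cast_one]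
  refine Finset.sum_congr rfl fun j _ ↦ ?_
  rw [div_mul_cancel₀ _ (Nat.cast_add_one_ne_zero j)]

lemma exists_derivative_eq_and_eval_eq {K : Type*} [Field K] [CharZero K] (q : K[X]) (a c : K) :
    ∃ r : K[X], derivative r = q ∧ r.eval a = c := by
  obtain ⟨r, rfl⟩ := derivative_surjective q
  exact ⟨r + C (c - r.eval a), by simp, by simp⟩

lemma exists_polynomial_eval_eq_apply_smul {R M : Type*} [CommSemiring R] [AddCommMonoid M]
    [Module R M] {N : ℕ} (L : (j : Fin N) → MultilinearMap R (fun _ : Fin (j : ℕ) ↦ M) R)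
    (x : M) :
    ∃ p : R[X], p.degree < N ∧ ∀ t, p.eval t = ∑ j, L j (fun _ ↦ t • x) := by
  refine ⟨∑ j : Fin N, C (L j fun _ ↦ x) * X ^ (j : ℕ), degree_sum_fin_lt _, fun t ↦ ?_⟩
  rw [eval_finsetSum]
  refine Finset.sum_congr rfl fun j _ ↦ ?_
  rw [(L j).map_smul_univ (fun _ ↦ t) (fun _ ↦ x)]
  simp only [eval_mul, eval_C, eval_pow, eval_X, Finset.prod_const, Finset.card_univ,
    Fintype.card_fin, smul_eq_mul, mul_comm]

end PolynomialComparison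

section ChebyshevFunctions

open Set Filter Polynomial
open scoped Topology ContDiff

/-- The Chebyshev polynomial function `T_n` on `[-1, 1]`; it is constant on each side of
that interval, by the convention for `Real.arccos`. -/
noncomputable def chebT (n : ℕ) (s : ℝ) : ℝ := Real.cos (n * Real.arccos s)

/-- The conjugate function `S_n` of the Chebyshev polynomial function `T_n`; it is constant on
each side of `[-1, 1]`, by the convention for `Real.arccos`. -/
noncomputable def chebS (n : ℕ) (s : ℝ) : ℝ := Real.sin (n * Real.arccos s)

/-- Smooth solutions on `(-1, 1)` of Chebyshev's equation `(1 - x²) f'' - x f' + ν f = 0`.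
For `ν = n²` both `T_n` and `S_n` are such solutions. -/
structure IsChebyshevSolution (ν : ℝ) (f : ℝ → ℝ) : Prop where
  contDiffAt : ∀ x ∈ Ioo (-1 : ℝ) 1, ContDiffAt ℝ ∞ f x
  ode : ∀ x ∈ Ioo (-1 : ℝ) 1, (1 - x ^ 2) * deriv (deriv f) x = x * deriv f x - ν * f x

lemma chebM_eq (n k : ℕ) (x : ℝ) :
    chebM n k x = iteratedDeriv k (chebT n) x ^ 2 + iteratedDeriv k (chebS n) x ^ 2 := rfl

lemma chebT_sq_add_chebS_sq (n : ℕ) (x : ℝ) : chebT n x ^ 2 + chebS n x ^ 2 = 1 :=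
  Real.cos_sq_add_sin_sq _

lemma one_sub_sq_pos_of_mem_Ioo {x : ℝ} (hx : x ∈ Ioo (-1 : ℝ) 1) : 0 < 1 - x ^ 2 :=
  sub_pos.2 ((sq_lt_one_iff_abs_lt_one x).2 (abs_lt.2 hx))

lemma hasDerivAt_one_sub_sq (x : ℝ) : HasDerivAt (fun y : ℝ ↦ 1 - y ^ 2) (-(2 * x)) x := by
  simpa using (hasDerivAt_pow 2 x).const_sub 1

lemma hasDerivAt_iteratedDeriv_of_contDiffAt {𝕜 F : Type*} [NontriviallyNormedField 𝕜]
    [NormedAddCommGroup F] [NormedSpace 𝕜 F] {f : 𝕜 → F} {x : 𝕜} {k : ℕ}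
    (hf : ContDiffAt 𝕜 (k + 1 : ℕ) f x) :
    HasDerivAt (iteratedDeriv k f) (iteratedDeriv (k + 1) f x) x := by
  have hdiff : DifferentiableAt 𝕜 (iteratedDeriv k f) x := by
    rw [← differentiableWithinAt_univ, ← iteratedDerivWithin_univ]
    exact (contDiffWithinAt_univ.2 hf).differentiableWithinAt_iteratedDerivWithin
      (mod_cast k.lt_succ_self) (by simp [uniqueDiffOn_univ])
  rw [iteratedDeriv_succ]
  exact hdiff.hasDerivAt

lemma isChebyshevSolution_of_hasDerivAt_conjugate {f g : ℝ → ℝ} {c : ℝ}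
    (hcont : ∀ x ∈ Ioo (-1 : ℝ) 1, ContDiffAt ℝ ∞ f x)
    (hf : ∀ x ∈ Ioo (-1 : ℝ) 1, HasDerivAt f (c * g x / √(1 - x ^ 2)) x)
    (hg : ∀ x ∈ Ioo (-1 : ℝ) 1, HasDerivAt g (-(c * f x / √(1 - x ^ 2))) x) :
    IsChebyshevSolution (c ^ 2) f where
  contDiffAt := hcont
  ode x hx := by
    have hw := one_sub_sq_pos_of_mem_Ioo hx
    have hsqrt := Real.sqrt_pos.2 hw
    have hderiv : deriv f =ᶠ[𝓝 x] fun y ↦ c * g y / √(1 - y ^ 2) :=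
      eventually_of_mem (Ioo_mem_nhds hx.1 hx.2) fun y hy ↦ (hf y hy).deriv
    have hderiv₂ := ((hg x hx).const_mul c).fun_div
      ((hasDerivAt_one_sub_sq x).sqrt hw.ne') hsqrt.ne'
    rw [hderiv.deriv_eq, hderiv₂.deriv, (hf x hx).deriv, Real.sq_sqrt hw.le]
    field_simp
    ring

lemma hasDerivAt_const_mul_arccos (c : ℝ) {x : ℝ} (hx : x ∈ Ioo (-1 : ℝ) 1) :
    HasDerivAt (fun s ↦ c * Real.arccos s) (-(c / √(1 - x ^ 2))) x := by
  simpa [div_eq_mul_inv] using (Real.hasDerivAt_arccos hx.1.ne' hx.2.ne).const_mul c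

lemma contDiffAt_const_mul_arccos (c : ℝ) {x : ℝ} (hx : x ∈ Ioo (-1 : ℝ) 1) :
    ContDiffAt ℝ ∞ (fun s ↦ c * Real.arccos s) x :=
  contDiffAt_const.mul (Real.contDiffAt_arccos hx.1.ne' hx.2.ne)

lemma hasDerivAt_chebT (n : ℕ) {x : ℝ} (hx : x ∈ Ioo (-1 : ℝ) 1) :
    HasDerivAt (chebT n) (n * chebS n x / √(1 - x ^ 2)) x := by
  refine (hasDerivAt_const_mul_arccos n hx).cos.congr_deriv ?_
  rw [chebS]
  ring

lemma hasDerivAt_chebS (n : ℕ) {x : ℝ} (hx : x ∈ Ioo (-1 : ℝ) 1) :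
    HasDerivAt (chebS n) (-(n * chebT n x / √(1 - x ^ 2))) x := by
  refine (hasDerivAt_const_mul_arccos n hx).sin.congr_deriv ?_
  rw [chebT]
  ring

lemma isChebyshevSolution_chebT (n : ℕ) : IsChebyshevSolution (n ^ 2) (chebT n) :=
  isChebyshevSolution_of_hasDerivAt_conjugate
    (fun _ hx ↦ (contDiffAt_const_mul_arccos n hx).cos)
    (fun _ ↦ hasDerivAt_chebT n) (fun _ ↦ hasDerivAt_chebS n)

lemma isChebyshevSolution_chebS (n : ℕ) : IsChebyshevSolution (n ^ 2) (chebS n) := by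
  rw [← neg_sq]
  refine isChebyshevSolution_of_hasDerivAt_conjugate (g := chebT n)
    (fun _ hx ↦ (contDiffAt_const_mul_arccos n hx).sin)
    (fun _ hx ↦ (hasDerivAt_chebS n hx).congr_deriv (by ring))
    (fun _ hx ↦ (hasDerivAt_chebT n hx).congr_deriv (by ring))

namespace IsChebyshevSolution

variable {ν : ℝ} {f g : ℝ → ℝ}

lemma hasDerivAt_iteratedDeriv (hf : IsChebyshevSolution ν f) (k : ℕ) {x : ℝ}
    (hx : x ∈ Ioo (-1 : ℝ) 1) :
    HasDerivAt (iteratedDeriv k f) (iteratedDeriv (k + 1) f x) x :=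
  hasDerivAt_iteratedDeriv_of_contDiffAt ((hf.contDiffAt x hx).of_le (mod_cast le_top))

theorem ode_iteratedDeriv (hf : IsChebyshevSolution ν f) (k : ℕ) {x : ℝ}
    (hx : x ∈ Ioo (-1 : ℝ) 1) :
    (1 - x ^ 2) * iteratedDeriv (k + 2) f x =
      (2 * k + 1) * x * iteratedDeriv (k + 1) f x - (ν - k ^ 2) * iteratedDeriv k f x := by
  induction k generalizing x with
  | zero => simpa [iteratedDeriv_succ] using hf.ode x hx
  | succ k ih =>
    have hlhs := (hasDerivAt_one_sub_sq x).fun_mul (hf.hasDerivAt_iteratedDeriv (k + 2) hx)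
    have hrhs := (((hasDerivAt_id' x).const_mul (2 * k + 1 : ℝ)).fun_mul
      (hf.hasDerivAt_iteratedDeriv (k + 1) hx)).fun_sub
        ((hf.hasDerivAt_iteratedDeriv k hx).const_mul (ν - k ^ 2))
    have hderiv := hlhs.unique (hrhs.congr_of_eventuallyEq
      (eventually_of_mem (Ioo_mem_nhds hx.1 hx.2) fun _ ↦ ih))
    push_cast
    linear_combination hderiv

lemma one_sub_sq_mul_wronskian (hf : IsChebyshevSolution ν f) (hg : IsChebyshevSolution ν g)
    (k : ℕ) {x : ℝ} (hx : x ∈ Ioo (-1 : ℝ) 1) :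
    (1 - x ^ 2) * (iteratedDeriv (k + 1) f x * iteratedDeriv (k + 2) g x -
        iteratedDeriv (k + 2) f x * iteratedDeriv (k + 1) g x) =
      (ν - k ^ 2) * (iteratedDeriv k f x * iteratedDeriv (k + 1) g x -
        iteratedDeriv (k + 1) f x * iteratedDeriv k g x) := by
  linear_combination iteratedDeriv (k + 1) f x * hg.ode_iteratedDeriv k hx -
    iteratedDeriv (k + 1) g x * hf.ode_iteratedDeriv k hx

lemma hasDerivAt_one_sub_sq_pow_mul_sq (hf : IsChebyshevSolution ν f) (k : ℕ) {x : ℝ}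
    (hx : x ∈ Ioo (-1 : ℝ) 1) :
    HasDerivAt (fun y ↦ (1 - y ^ 2) ^ (2 * k + 1) * iteratedDeriv (k + 1) f y ^ 2)
      (-((ν - k ^ 2) * (1 - x ^ 2) ^ (2 * k) *
        (2 * iteratedDeriv k f x * iteratedDeriv (k + 1) f x))) x := by
  refine (((hasDerivAt_one_sub_sq x).fun_pow (2 * k + 1)).fun_mul
    ((hf.hasDerivAt_iteratedDeriv (k + 1) hx).fun_pow 2)).congr_deriv ?_
  rw [Nat.add_sub_cancel]
  push_cast
  linear_combination 2 * (1 - x ^ 2) ^ (2 * k) * iteratedDeriv (k + 1) f x *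
    hf.ode_iteratedDeriv k hx

end IsChebyshevSolution

lemma iteratedDeriv_chebT_eq_eval (n k : ℕ) {x : ℝ} (hx : x ∈ Ioo (-1 : ℝ) 1) :
    iteratedDeriv k (chebT n) x = (derivative^[k] (Chebyshev.T ℝ n)).eval x := by
  induction k generalizing x with
  | zero =>
    rw [iteratedDeriv_zero, Function.iterate_zero, id, chebT,
      ← Real.cos_arccos hx.1.le hx.2.le, Chebyshev.T_real_cos, Real.cos_arccos hx.1.le hx.2.le,
      Int.cast_natCast]
  | succ k ih =>
    rw [Function.iterate_succ_apply']
    exact ((isChebyshevSolution_chebT n).hasDerivAt_iteratedDeriv k hx).unique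
      ((Polynomial.hasDerivAt _ x).congr_of_eventuallyEq
        (eventually_of_mem (Ioo_mem_nhds hx.1 hx.2) fun _ ↦ ih))

lemma wronskian_iteratedDeriv_chebT_chebS_neg {n k : ℕ} (hkn : k ≤ n) (hn : 0 < n) {x : ℝ}
    (hx : x ∈ Ioo (-1 : ℝ) 1) :
    iteratedDeriv k (chebT n) x * iteratedDeriv (k + 1) (chebS n) x -
      iteratedDeriv (k + 1) (chebT n) x * iteratedDeriv k (chebS n) x < 0 := by
  have hw := one_sub_sq_pos_of_mem_Ioo hx
  induction k with
  | zero =>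
    have hwronskian : chebT n x * deriv (chebS n) x - deriv (chebT n) x * chebS n x =
        -(n / √(1 - x ^ 2)) := by
      rw [(hasDerivAt_chebT n hx).deriv, (hasDerivAt_chebS n hx).deriv]
      linear_combination -(n / √(1 - x ^ 2)) * chebT_sq_add_chebS_sq n x
    simp only [zero_add, iteratedDeriv_zero, iteratedDeriv_one, hwronskian, neg_lt_zero]
    exact div_pos (Nat.cast_pos.2 hn) (Real.sqrt_pos.2 hw)
  | succ k ih =>
    have hk : (0 : ℝ) < n ^ 2 - k ^ 2 := by
      rw [sub_pos]
      exact_mod_cast Nat.pow_lt_pow_left hkn two_ne_zero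
    refine neg_of_mul_neg_right ?_ hw.le
    rw [(isChebyshevSolution_chebT n).one_sub_sq_mul_wronskian (isChebyshevSolution_chebS n) k hx]
    exact mul_neg_of_pos_of_neg hk (ih (Nat.le_of_succ_le hkn))

lemma hasDerivAt_eval_one_sub_sq (r : ℝ[X]) (x : ℝ) :
    HasDerivAt (fun y ↦ r.eval (1 - y ^ 2)) (-(2 * x) * (derivative r).eval (1 - x ^ 2)) x :=
  (HasDerivAt.comp x (h₂ := fun w ↦ r.eval w) (r.hasDerivAt (1 - x ^ 2))
    (hasDerivAt_one_sub_sq x)).congr_deriv (mul_comm _ _)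

lemma hasDerivAt_eval_one_sub_sq_div_pow (r : ℝ[X]) (N : ℕ) {x : ℝ} (hx : x ∈ Ioo (-1 : ℝ) 1) :
    HasDerivAt (fun y ↦ r.eval (1 - y ^ 2) / (1 - y ^ 2) ^ N)
      (2 * x * ((N : ℝ[X]) * r - X * derivative r).eval (1 - x ^ 2) / (1 - x ^ 2) ^ (N + 1)) x := by
  have hw := one_sub_sq_pos_of_mem_Ioo hx
  refine ((hasDerivAt_eval_one_sub_sq r x).fun_div ((hasDerivAt_one_sub_sq x).fun_pow N)
    (pow_pos hw N).ne').congr_deriv ?_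
  rw [eval_sub, eval_mul, eval_mul, eval_natCast, eval_X]
  cases N with
  | zero =>
    simp only [pow_zero, pow_one, zero_add, CharP.cast_eq_zero]
    field_simp
    ring
  | succ N =>
    rw [Nat.add_sub_cancel]
    field_simp
    ring

lemma exists_eq_eval_one_sub_sq_of_hasDerivAt {F : ℝ → ℝ} {q : ℝ[X]}
    (hF : ∀ x ∈ Ioo (-1 : ℝ) 1, 0 ≤ F x) (hq : ∀ j, 0 ≤ q.coeff j)
    (hderiv : ∀ x ∈ Ioo (-1 : ℝ) 1, HasDerivAt F (-(2 * x) * q.eval (1 - x ^ 2)) x) :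
    ∃ r : ℝ[X], r.natDegree ≤ q.natDegree + 1 ∧ (∀ j, 0 ≤ r.coeff j) ∧
      ∀ x ∈ Ioo (-1 : ℝ) 1, F x = r.eval (1 - x ^ 2) := by
  obtain ⟨r, rfl, hr₁⟩ := exists_derivative_eq_and_eval_eq q 1 (F 0)
  have hFr : ∀ x ∈ Ioo (-1 : ℝ) 1, F x = r.eval (1 - x ^ 2) := by
    refine isOpen_Ioo.eqOn_of_deriv_eq isPreconnected_Ioo
      (fun x hx ↦ (hderiv x hx).differentiableAt.differentiableWithinAt)
      (fun x _ ↦ (hasDerivAt_eval_one_sub_sq r x).differentiableAt.differentiableWithinAt)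
      (fun x hx ↦ (hderiv x hx).deriv.trans (hasDerivAt_eval_one_sub_sq r x).deriv.symm)
      (show (0 : ℝ) ∈ Ioo (-1) 1 by norm_num) ?_
    simp [hr₁]
  refine ⟨r, ?_, fun j ↦ ?_, hFr⟩
  · rw [natDegree_derivative]
    exact le_tsub_add
  · cases j with
    | zero =>
      -- The derivative does not see this coefficient, which is the limit of `F ≥ 0` at `1`.
      have hlim : Tendsto (fun x : ℝ ↦ r.eval (1 - x ^ 2)) (𝓝[<] 1) (𝓝 (r.coeff 0)) := by
        have hcont : Continuous fun x : ℝ ↦ r.eval (1 - x ^ 2) := by fun_prop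
        simpa [coeff_zero_eq_eval_zero] using (hcont.tendsto 1).mono_left nhdsWithin_le_nhds
      refine ge_of_tendsto hlim (eventually_of_mem (Ioo_mem_nhdsLT (by norm_num : (-1 : ℝ) < 1))
        fun x hx ↦ ?_)
      exact hFr x hx ▸ hF x hx
    | succ j =>
      have hcoeff := hq j
      rw [coeff_derivative] at hcoeff
      exact nonneg_of_mul_nonneg_left hcoeff (by positivity)

lemma hasDerivAt_one_sub_sq_pow_mul_chebM (n k : ℕ) {x M' : ℝ} (hx : x ∈ Ioo (-1 : ℝ) 1)
    (hM : HasDerivAt (chebM n k) M' x) :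
    HasDerivAt (fun y ↦ (1 - y ^ 2) ^ (2 * k + 1) * chebM n (k + 1) y)
      (-((n ^ 2 - k ^ 2) * (1 - x ^ 2) ^ (2 * k) * M')) x := by
  have hT := isChebyshevSolution_chebT n
  have hS := isChebyshevSolution_chebS n
  have hM' := hM.unique
    (((hT.hasDerivAt_iteratedDeriv k hx).fun_pow 2).fun_add
      ((hS.hasDerivAt_iteratedDeriv k hx).fun_pow 2))
  simp only [chebM_eq, mul_add]
  refine ((hT.hasDerivAt_one_sub_sq_pow_mul_sq k hx).fun_add
    (hS.hasDerivAt_one_sub_sq_pow_mul_sq k hx)).congr_deriv ?_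
  rw [hM']
  push_cast
  ring

lemma one_sub_sq_mul_chebM_one (n : ℕ) {x : ℝ} (hx : x ∈ Ioo (-1 : ℝ) 1) :
    (1 - x ^ 2) * chebM n 1 x = n ^ 2 := by
  have hw := one_sub_sq_pos_of_mem_Ioo hx
  rw [chebM_eq, iteratedDeriv_one, iteratedDeriv_one, (hasDerivAt_chebT n hx).deriv,
    (hasDerivAt_chebS n hx).deriv, neg_sq, div_pow, div_pow, Real.sq_sqrt hw.le]
  field_simp
  rw [add_comm, chebT_sq_add_chebS_sq, mul_one]

lemma chebM_nonneg (n k : ℕ) (x : ℝ) : 0 ≤ chebM n k x := by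
  rw [chebM_eq]
  positivity

lemma hasDerivAt_one_sub_sq_pow_mul_chebM_of_eq_eval_div_pow {n k : ℕ} {r : ℝ[X]}
    (hr : ∀ x ∈ Ioo (-1 : ℝ) 1,
      chebM n (k + 1) x = r.eval (1 - x ^ 2) / (1 - x ^ 2) ^ (2 * k + 1))
    {x : ℝ} (hx : x ∈ Ioo (-1 : ℝ) 1) :
    HasDerivAt (fun y ↦ (1 - y ^ 2) ^ (2 * (k + 1) + 1) * chebM n (k + 2) y)
      (-(2 * x) * (C ((n : ℝ) ^ 2 - (k + 1 : ℕ) ^ 2) *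
        (((2 * k + 1 : ℕ) : ℝ[X]) * r - X * derivative r)).eval (1 - x ^ 2)) x := by
  have hw := one_sub_sq_pos_of_mem_Ioo hx
  refine (hasDerivAt_one_sub_sq_pow_mul_chebM n (k + 1) hx
    ((hasDerivAt_eval_one_sub_sq_div_pow r (2 * k + 1) hx).congr_of_eventuallyEq
      (eventually_of_mem (Ioo_mem_nhds hx.1 hx.2) hr))).congr_deriv ?_
  rw [eval_mul, eval_C]
  field_simp
  ring

theorem exists_chebM_eq_eval_div_pow {n k : ℕ} (hkn : k ≤ n) :
    ∃ r : ℝ[X], r.natDegree ≤ k ∧ (∀ j, 0 ≤ r.coeff j) ∧ ∀ x ∈ Ioo (-1 : ℝ) 1,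
      chebM n (k + 1) x = r.eval (1 - x ^ 2) / (1 - x ^ 2) ^ (2 * k + 1) := by
  induction k with
  | zero =>
    refine ⟨C ((n : ℝ) ^ 2), by simp, fun j ↦ ?_, fun x hx ↦ ?_⟩
    · rw [coeff_C]
      split_ifs <;> positivity
    · rw [eval_C, mul_zero, zero_add, pow_one]
      exact eq_div_of_mul_eq (one_sub_sq_pos_of_mem_Ioo hx).ne'
        ((mul_comm _ _).trans (one_sub_sq_mul_chebM_one n hx))
  | succ k ih =>
    obtain ⟨r, hdeg, hcoeff, hr⟩ := ih (Nat.le_of_succ_le hkn)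
    have hnk : (0 : ℝ) ≤ n ^ 2 - (k + 1 : ℕ) ^ 2 := by
      rw [sub_nonneg]
      exact_mod_cast Nat.pow_le_pow_left hkn 2
    set q : ℝ[X] := ((2 * k + 1 : ℕ) : ℝ[X]) * r - X * derivative r
    obtain ⟨p, hpdeg, hpcoeff, hp⟩ := exists_eq_eval_one_sub_sq_of_hasDerivAt
      (fun x hx ↦ mul_nonneg (pow_pos (one_sub_sq_pos_of_mem_Ioo hx) _).le (chebM_nonneg n _ x))
      (fun j ↦ (coeff_C_mul q).symm ▸ mul_nonneg hnk
        (coeff_natCast_mul_sub_X_mul_derivative_nonneg hcoeff (hdeg.trans (by lia)) j))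
      fun x hx ↦ hasDerivAt_one_sub_sq_pow_mul_chebM_of_eq_eval_div_pow hr hx
    refine ⟨p, ?_, hpcoeff, fun x hx ↦
      eq_div_of_mul_eq (pow_pos (one_sub_sq_pos_of_mem_Ioo hx) _).ne'
        ((mul_comm _ _).trans (hp x hx))⟩
    calc p.natDegree ≤ (C ((n : ℝ) ^ 2 - (k + 1 : ℕ) ^ 2) * q).natDegree + 1 := hpdeg
      _ ≤ k + 1 := Nat.succ_le_succ ((natDegree_C_mul_le _ _).trans
        ((natDegree_natCast_mul_sub_X_mul_derivative_le r _).trans hdeg))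

theorem chebM_le_chebM_of_abs_le {n k : ℕ} (hkn : k ≤ n) {s t : ℝ} (hst : |s| ≤ |t|)
    (ht : |t| < 1) : chebM n (k + 1) s ≤ chebM n (k + 1) t := by
  obtain ⟨r, hdeg, hcoeff, hr⟩ := exists_chebM_eq_eval_div_pow hkn
  have hs : s ∈ Ioo (-1 : ℝ) 1 := abs_lt.1 (hst.trans_lt ht)
  replace ht : t ∈ Ioo (-1 : ℝ) 1 := abs_lt.1 ht
  rw [hr s hs, hr t ht]
  exact antitoneOn_eval_div_pow hcoeff (hdeg.trans (by lia)) (one_sub_sq_pos_of_mem_Ioo ht)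
    (one_sub_sq_pos_of_mem_Ioo hs) (sub_le_sub_left (sq_le_sq.2 hst) 1)

lemma exists_mem_Ioo_pos_and_deriv_eq_zero {g : ℝ → ℝ} {a b : ℝ} (hab : a < b)
    (hg : ContinuousOn g (Icc a b)) (ha : g a ≤ 0) (hb : g b = 0) (hb' : deriv g b < 0) :
    ∃ y ∈ Ioo a b, 0 < g y ∧ deriv g y = 0 := by
  obtain ⟨z, hsign, hz⟩ := (((eventually_nhdsWithin_sign_eq_of_deriv_neg hb' hb).filter_mono
    nhdsWithin_le_nhds).and (Ioo_mem_nhdsLT hab)).exists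
  have hgz : 0 < g z := by rwa [sign_pos (sub_pos.2 hz.2), sign_eq_one_iff] at hsign
  obtain ⟨y, hy, hmax⟩ := isCompact_Icc.exists_isMaxOn (nonempty_Icc.2 hab.le) hg
  have hgy : 0 < g y := hgz.trans_le (hmax (Ioo_subset_Icc_self hz))
  have hay : a < y := hy.1.lt_of_ne (by rintro rfl; exact hgy.not_ge ha)
  have hyb : y < b := hy.2.lt_of_ne (by rintro rfl; exact hgy.ne' hb)
  exact ⟨y, ⟨hay, hyb⟩, hgy, (hmax.isLocalMax (Icc_mem_nhds hay hyb)).deriv_eq_zero⟩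

/-- A decreasing family `x` of zeros in `(-1, 1)` of the `k`-th derivative of `S_n`, at which the
`k`-th derivative of `T_n` has alternating signs, positive at the largest zero `x 0`. -/
structure IsChebyshevAlternation (n k : ℕ) {m : ℕ} (x : Fin (m + 1) → ℝ) : Prop where
  strictAnti : StrictAnti x
  mem_Ioo : ∀ i, x i ∈ Ioo (-1 : ℝ) 1
  chebS_eq_zero : ∀ i, iteratedDeriv k (chebS n) (x i) = 0
  chebT_pos : ∀ i : Fin (m + 1), 0 < (-1) ^ (i : ℕ) * iteratedDeriv k (chebT n) (x i)

-- The Wronskian sign turns the sign of `T_n^{(k)}` at a zero of `S_n^{(k)}` into a slope of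
-- `S_n^{(k)}` there, and the sign of `S_n^{(k)}` at its extremum into a sign of `T_n^{(k+1)}`.
lemma exists_mem_Ioo_iteratedDeriv_succ_chebS_eq_zero {n k : ℕ} (hkn : k ≤ n) (hn : 0 < n)
    {a b ε : ℝ} (ha : a ∈ Ioo (-1 : ℝ) 1) (hb : b ∈ Ioo (-1 : ℝ) 1) (hab : a < b)
    (hSa : iteratedDeriv k (chebS n) a = 0) (hSb : iteratedDeriv k (chebS n) b = 0)
    (hTb : 0 < ε * iteratedDeriv k (chebT n) b) :
    ∃ y ∈ Ioo a b, iteratedDeriv (k + 1) (chebS n) y = 0 ∧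
      0 < ε * iteratedDeriv (k + 1) (chebT n) y := by
  have hε : ε ≠ 0 := left_ne_zero_of_mul hTb.ne'
  have hderiv : ∀ y ∈ Icc a b, HasDerivAt (fun z ↦ ε * iteratedDeriv k (chebS n) z)
      (ε * iteratedDeriv (k + 1) (chebS n) y) y := fun y hy ↦
    ((isChebyshevSolution_chebS n).hasDerivAt_iteratedDeriv k
      (Icc_subset_Ioo ha.1 hb.2 hy)).const_mul ε
  have hSb' : ε * iteratedDeriv (k + 1) (chebS n) b < 0 := by
    have hW := wronskian_iteratedDeriv_chebT_chebS_neg hkn hn hb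
    rw [hSb, mul_zero, sub_zero] at hW
    refine neg_of_mul_neg_right ?_ hTb.le
    rw [mul_mul_mul_comm]
    exact mul_neg_of_pos_of_neg (mul_self_pos.2 hε) hW
  obtain ⟨y, hy, hSy, hSy'⟩ := exists_mem_Ioo_pos_and_deriv_eq_zero hab
    (fun z hz ↦ (hderiv z hz).continuousAt.continuousWithinAt) (by simp [hSa]) (by simp [hSb])
    ((hderiv b (right_mem_Icc.2 hab.le)).deriv.trans_lt hSb')
  rw [(hderiv y (Ioo_subset_Icc_self hy)).deriv, mul_eq_zero_iff_left hε] at hSy'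
  refine ⟨y, hy, hSy', ?_⟩
  have hW := wronskian_iteratedDeriv_chebT_chebS_neg hkn hn (Ioo_subset_Ioo ha.1.le hb.2.le hy)
  rw [hSy', mul_zero, zero_sub, neg_lt_zero] at hW
  refine pos_of_mul_pos_left ?_ hSy.le
  rw [mul_mul_mul_comm]
  exact mul_pos (mul_self_pos.2 hε) hW

lemma IsChebyshevAlternation.exists_succ {n k m : ℕ} {x : Fin (m + 1 + 1) → ℝ}
    (hx : IsChebyshevAlternation n k x) (hkn : k ≤ n) (hn : 0 < n) :
    ∃ y : Fin (m + 1) → ℝ, IsChebyshevAlternation n (k + 1) y := by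
  have hzero : ∀ i : Fin (m + 1), ∃ y ∈ Ioo (x i.succ) (x i.castSucc),
      iteratedDeriv (k + 1) (chebS n) y = 0 ∧
        0 < (-1) ^ (i : ℕ) * iteratedDeriv (k + 1) (chebT n) y := fun i ↦
    exists_mem_Ioo_iteratedDeriv_succ_chebS_eq_zero hkn hn (hx.mem_Ioo _) (hx.mem_Ioo _)
      (hx.strictAnti Fin.castSucc_lt_succ) (hx.chebS_eq_zero _) (hx.chebS_eq_zero _)
      (hx.chebT_pos i.castSucc)
  choose y hy hSy hTy using hzero
  refine ⟨y, Fin.strictAnti_iff_succ_lt.2 fun i ↦ ?_, fun i ↦ ?_, hSy, hTy⟩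
  · exact (hy i.succ).2.trans (hy i.castSucc).1
  · exact Ioo_subset_Ioo (hx.mem_Ioo _).1.le (hx.mem_Ioo _).2.le (hy i)

lemma isChebyshevAlternation_one (m : ℕ) :
    IsChebyshevAlternation (m + 1) 1
      fun i : Fin (m + 1) ↦ Real.cos ((2 * (i : ℕ) + 1) * Real.pi / (2 * (m + 1 : ℕ))) := by
  set θ : Fin (m + 1) → ℝ := fun i ↦ (2 * (i : ℕ) + 1) * Real.pi / (2 * (m + 1 : ℕ)) with hθ
  have hθ_mem : ∀ i, θ i ∈ Ioo 0 Real.pi := fun i ↦ by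
    refine ⟨by positivity, (div_lt_iff₀ (by positivity)).2 ?_⟩
    rw [mul_comm Real.pi]
    refine mul_lt_mul_of_pos_right ?_ Real.pi_pos
    exact_mod_cast (by lia : 2 * (i : ℕ) + 1 < 2 * (m + 1))
  have hcos_mem : ∀ i, Real.cos (θ i) ∈ Ioo (-1 : ℝ) 1 := fun i ↦ by
    rw [mem_Ioo, ← abs_lt, ← sq_lt_one_iff_abs_lt_one, Real.cos_sq', sub_lt_self_iff]
    exact pow_pos (Real.sin_pos_of_mem_Ioo (hθ_mem i)) 2
  have harccos : ∀ i, ((m + 1 : ℕ) : ℝ) * Real.arccos (Real.cos (θ i)) =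
      (i : ℕ) * Real.pi + Real.pi / 2 := fun i ↦ by
    rw [Real.arccos_cos (hθ_mem i).1.le (hθ_mem i).2.le, hθ]
    field_simp
  have hchebT : ∀ i, chebT (m + 1) (Real.cos (θ i)) = 0 := fun i ↦ by
    rw [chebT, harccos, Real.cos_add_pi_div_two, Real.sin_nat_mul_pi, neg_zero]
  have hchebS : ∀ i, chebS (m + 1) (Real.cos (θ i)) = (-1) ^ (i : ℕ) := fun i ↦ by
    rw [chebS, harccos, Real.sin_add_pi_div_two, Real.cos_nat_mul_pi]
  refine ⟨fun i j hij ↦ ?_, hcos_mem, fun i ↦ ?_, fun i ↦ ?_⟩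
  · refine Real.cos_lt_cos_of_nonneg_of_le_pi (hθ_mem i).1.le (hθ_mem j).2.le ?_
    show (2 * (i : ℕ) + 1) * Real.pi / _ < (2 * (j : ℕ) + 1) * Real.pi / _
    gcongr
    exact hij
  · rw [iteratedDeriv_one, (hasDerivAt_chebS _ (hcos_mem i)).deriv, hchebT, mul_zero, zero_div,
      neg_zero]
  · rw [iteratedDeriv_one, (hasDerivAt_chebT _ (hcos_mem i)).deriv, hchebS, mul_div_assoc,
      mul_left_comm, ← mul_div_assoc, ← pow_add, Even.neg_one_pow ⟨_, rfl⟩]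
    have hsqrt := Real.sqrt_pos.2 (one_sub_sq_pos_of_mem_Ioo (hcos_mem i))
    positivity

theorem exists_isChebyshevAlternation (k m : ℕ) :
    ∃ x : Fin (m + 1) → ℝ, IsChebyshevAlternation (m + (k + 1)) (k + 1) x := by
  induction k generalizing m with
  | zero => exact ⟨_, isChebyshevAlternation_one m⟩
  | succ k ih =>
    obtain ⟨x, hx⟩ := ih (m + 1)
    rw [Nat.succ_add_eq_add_succ] at hx
    exact hx.exists_succ (by lia) (by lia)

lemma degree_iterate_derivative_T_lt (n k : ℕ) :
    (derivative^[k] (Chebyshev.T ℝ n)).degree < (n - k + 1 : ℕ) := by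
  have hnat : (derivative^[k] (Chebyshev.T ℝ n)).natDegree ≤ n - k := by
    simpa using natDegree_iterate_derivative (Chebyshev.T ℝ n) k
  exact degree_le_natDegree.trans_lt (mod_cast Nat.lt_succ_of_le hnat)

lemma IsChebyshevAlternation.abs_le_of_sq_le_chebM {n k m : ℕ} {x : Fin (m + 1) → ℝ}
    (hx : IsChebyshevAlternation n k x) {i : Fin (m + 1)} {a : ℝ}
    (ha : a ^ 2 ≤ chebM n k (x i)) :
    |a| ≤ (-1) ^ (i : ℕ) * (derivative^[k] (Chebyshev.T ℝ n)).eval (x i) := by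
  rw [chebM_eq, hx.chebS_eq_zero, zero_pow two_ne_zero, add_zero] at ha
  rw [← iteratedDeriv_chebT_eq_eval n k (hx.mem_Ioo i), ← abs_of_pos (hx.chebT_pos i), abs_mul,
    abs_neg_one_pow, one_mul]
  exact sq_le_sq.1 ha

theorem abs_eval_one_le_chebTDerivOne {n k : ℕ} (hk1 : 1 ≤ k) (hkn : k ≤ n) {p : ℝ[X]}
    (hp : p.degree < (n - k + 1 : ℕ))
    (hpM : ∀ t ∈ Ioo (-1 : ℝ) 1, p.eval t ^ 2 ≤ chebM n k t) :
    |p.eval 1| ≤ chebTDerivOne n k := by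
  obtain ⟨x, hx⟩ : ∃ x : Fin (n - k + 1) → ℝ, IsChebyshevAlternation n k x := by
    simpa only [Nat.sub_add_cancel hk1, Nat.sub_add_cancel hkn] using
      exists_isChebyshevAlternation (k - 1) (n - k)
  exact abs_eval_le_eval_of_alternating hx.strictAnti hp (degree_iterate_derivative_T_lt n k)
    (fun i ↦ hx.abs_le_of_sq_le_chebM (hpM _ (hx.mem_Ioo i))) (hx.mem_Ioo 0).2.le

lemma chebTDerivOne_eq_prod_div_prod (n k : ℕ) :
    chebTDerivOne n k = (∏ i ∈ Finset.range k, ((n : ℝ) ^ 2 - (i : ℝ) ^ 2)) /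
      ∏ i ∈ Finset.range k, (2 * (i : ℝ) + 1) := by
  have hT := Chebyshev.iterate_derivative_T_eval_one_eq_div (𝔽 := ℝ) (n : ℤ) k
  push_cast at hT
  exact hT

theorem schaeffer_duffin_comparison_banach_general {X : Type*} [SeminormedAddCommGroup X]
    [NormedSpace ℝ X] (n k : ℕ) (hk1 : 1 ≤ k) (hkn : k ≤ n) (P : X → ℝ)
    (hP : ∃ L : (j : Fin (n - k + 1)) → MultilinearMap ℝ (fun _ : Fin (j : ℕ) ↦ X) ℝ,
      ∀ x, P x = ∑ j, L j (fun _ ↦ x))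
    (hPM : ∀ x : X, ‖x‖ < 1 → |P x| ^ 2 ≤ chebM n k ‖x‖) :
    (∀ x : X, ‖x‖ ≤ 1 → |P x| ≤ chebTDerivOne n k) ∧
      chebTDerivOne n k
        = (∏ i ∈ Finset.range k, ((n : ℝ) ^ 2 - (i : ℝ) ^ 2)) /
            (∏ i ∈ Finset.range k, (2 * (i : ℝ) + 1)) := by
  refine ⟨fun x hx ↦ ?_, chebTDerivOne_eq_prod_div_prod n k⟩
  obtain ⟨L, hL⟩ := hP
  obtain ⟨p, hdeg, hp⟩ := exists_polynomial_eval_eq_apply_smul L x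
  have hpP : ∀ t, p.eval t = P (t • x) := fun t ↦ (hp t).trans (hL (t • x)).symm
  have hpM : ∀ t ∈ Ioo (-1 : ℝ) 1, p.eval t ^ 2 ≤ chebM n k t := fun t ht ↦ by
    have hxt : ‖t • x‖ ≤ |t| := by
      rw [norm_smul, Real.norm_eq_abs]
      exact mul_le_of_le_one_right (abs_nonneg t) hx
    have ht' : |t| < 1 := abs_lt.2 ht
    calc p.eval t ^ 2 = |P (t • x)| ^ 2 := by rw [hpP, sq_abs]
      _ ≤ chebM n k ‖t • x‖ := hPM _ (hxt.trans_lt ht')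
      _ ≤ chebM n k t := by
        rw [← Nat.sub_add_cancel hk1]
        exact chebM_le_chebM_of_abs_le ((Nat.sub_le k 1).trans hkn) (by rwa [abs_norm]) ht'
  simpa only [hpP, one_smul] using abs_eval_one_le_chebTDerivOne hk1 hkn hdeg hpM

end ChebyshevFunctions

/-- Schaeffer–Duffin comparison theorem on a real Banach space: if `P` is a continuous
polynomial of degree at most `n - k` with `|P(x)|² ≤ M_k(‖x‖)` for all `‖x‖ < 1`, then
`|P(x)| ≤ T_n^{(k)}(1) = n²(n²-1²)⋯(n²-(k-1)²)/(1·3⋯(2k-1))` for all `‖x‖ ≤ 1`. -/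
theorem schaeffer_duffin_comparison_banach
    {X : Type*} [NormedAddCommGroup X] [NormedSpace ℝ X] [CompleteSpace X]
    (n k : ℕ) (hk1 : 1 ≤ k) (hkn : k ≤ n) (P : X → ℝ)
    (hP : ∃ L : (j : Fin (n - k + 1)) → ContinuousMultilinearMap ℝ (fun _ : Fin (j : ℕ) => X) ℝ,
      ∀ x, P x = ∑ j, L j (fun _ => x))
    (hPM : ∀ x : X, ‖x‖ < 1 → |P x| ^ 2 ≤ chebM n k ‖x‖) :
    (∀ x : X, ‖x‖ ≤ 1 → |P x| ≤ chebTDerivOne n k) ∧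
      chebTDerivOne n k
        = (∏ i ∈ Finset.range k, ((n : ℝ) ^ 2 - (i : ℝ) ^ 2)) /
            (∏ i ∈ Finset.range k, (2 * (i : ℝ) + 1)) := by
  obtain ⟨L, hL⟩ := hP
  exact schaeffer_duffin_comparison_banach_general n k hk1 hkn P
    ⟨fun j ↦ (L j).toMultilinearMap, hL⟩ hPM
end

section
/- (V. A. Markov's theorem on real Hilbert spaces.) Let H be a real Hilbert space, let P be a continuous polynomial of degree at most n on H with ‖P‖ ≤ 1, and let 1 ≤ k ≤ n. Then for every x ∈ H with ‖x‖ ≤ 1, ‖D^k P(x)‖ = ‖D̂^k P(x)‖ ≤ T_n^{(k)}(1) = n²(n²−1²)⋯(n²−(k−1)²)/(1·3⋯(2k−1)). -/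
open Metric

/-! For `‖x‖, ‖y‖ ≤ 1` the polynomial `F (s, t) = P (s x + t y)` is bounded by `1` for
`|s| + |t| ≤ 1`, and `D^k P (x) (y, …, y)` is `k !` times the `k`-th coefficient of
`R t = F (1, t)`. The bound on `F` holds at `(cos ψ cos θ, sin ψ sin θ)` for all angles, so
`F` restricts there to a bounded trigonometric polynomial in `θ`. Replacing `θ` by `i η` with
`cos ψ cosh η = 1` reaches the points `(1, i sin ψ tan ψ)`, and there bounds the real and
imaginary parts of `R` by `cosh (n η)` and `sinh (n η)`. At the same points
`T_n (1 + t) = cos (n (ψ - i η))`, so these bounds are attained, with alternating signs, for the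
angles `ψ = m π / (2 n)`. Splitting `T_n (1 + t) ± R t` into its even and odd parts gives two
polynomials in `t ^ 2` that alternate in sign at nonpositive points; by Lagrange interpolation
all their coefficients are nonnegative, hence those of `R` are dominated by those of
`T_n (1 + t)`.

Passing from `y, …, y` to arbitrary arguments is Banach's theorem on symmetric multilinear maps
`L`: at a point of the unit ball where `‖L‖` is maximal, polarization and the parallelogram law
show that two arguments can both be replaced by the normalization of their sum, so among these
points one maximizing the length of the sum of its arguments is constant. -/

open Polynomial Finset
open scoped Nat

section NonnegCoeffs

/-- The polynomials all of whose coefficients are nonnegative. -/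
def nonnegCoeffs (R : Type*) [Semiring R] [PartialOrder R] [IsOrderedRing R] :
    Subsemiring R[X] where
  carrier := {p | ∀ i, 0 ≤ p.coeff i}
  mul_mem' hp hq i := by
    rw [coeff_mul]
    exact Finset.sum_nonneg fun _ _ => mul_nonneg (hp _) (hq _)
  one_mem' i := by
    rw [coeff_one]
    split_ifs <;> simp
  add_mem' hp hq i := by
    rw [coeff_add]
    exact add_nonneg (hp i) (hq i)
  zero_mem' _ := by simp

lemma C_mem_nonnegCoeffs {R : Type*} [Semiring R] [PartialOrder R] [IsOrderedRing R] {a : R}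
    (ha : 0 ≤ a) : C a ∈ nonnegCoeffs R := fun i => by
  rw [coeff_C]
  split_ifs
  exacts [ha, le_rfl]

lemma X_sub_C_mem_nonnegCoeffs {R : Type*} [Ring R] [PartialOrder R] [IsOrderedRing R] {z : R}
    (hz : z ≤ 0) : X - C z ∈ nonnegCoeffs R := by
  have hX : (X : R[X]) ∈ nonnegCoeffs R := fun i => by
    rw [coeff_X]
    split_ifs <;> simp
  rw [sub_eq_add_neg, ← C_neg]
  exact add_mem hX (C_mem_nonnegCoeffs (neg_nonneg.2 hz))

variable {K : Type*} [Field K] [LinearOrder K] [IsStrictOrderedRing K] {N : ℕ} {z : ℕ → K}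

lemma neg_one_pow_mul_lagrangeBasis_mem_nonnegCoeffs (hz : StrictAntiOn z (range N))
    (hz0 : ∀ i < N, z i ≤ 0) {j : ℕ} (hj : j < N) :
    C ((-1) ^ j) * Lagrange.basis (range N) z j ∈ nonnegCoeffs K := by
  have hsign : (-1 : K) ^ j = ∏ i ∈ (range N).erase j, if i < j then -1 else 1 := by
    have hfilter : ((range N).erase j).filter (· < j) = range j := by
      ext i
      simp only [mem_filter, mem_erase, mem_range]
      omega
    rw [prod_ite, prod_const_one, mul_one, prod_const, hfilter, card_range]
  rw [hsign, map_prod, Lagrange.basis, ← prod_mul_distrib]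
  refine prod_mem fun i hi => ?_
  obtain ⟨hij, hi⟩ := mem_erase.1 hi
  rw [Lagrange.basisDivisor, ← mul_assoc, ← C_mul]
  refine mul_mem (C_mem_nonnegCoeffs ?_) (X_sub_C_mem_nonnegCoeffs (hz0 i (mem_range.1 hi)))
  split_ifs with h
  · rw [neg_one_mul, neg_nonneg, inv_nonpos, sub_nonpos]
    exact (hz hi (mem_coe.2 (mem_range.2 hj)) h).le
  · rw [one_mul, inv_nonneg, sub_nonneg]
    exact (hz (mem_coe.2 (mem_range.2 hj)) hi (lt_of_le_of_ne (not_lt.1 h) hij.symm)).le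

-- Subtracting the leading term, a multiple of the nodal polynomial, leaves the interpolant.
theorem mem_nonnegCoeffs_of_alternating (hz : StrictAntiOn z (range N))
    (hz0 : ∀ j < N, z j ≤ 0) {p : K[X]} (hdeg : p.natDegree ≤ N) (hlead : 0 ≤ p.coeff N)
    (hp : ∀ j < N, 0 ≤ (-1) ^ j * p.eval (z j)) : p ∈ nonnegCoeffs K := by
  set ω := Lagrange.nodal (range N) z
  have hωdeg : ω.natDegree = N := by rw [Lagrange.natDegree_nodal, card_range]
  have hωlead : ω.coeff N = 1 := by
    rw [← hωdeg]
    exact Lagrange.nodal_monic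
  have hlt : (p - C (p.coeff N) * ω).degree < #(range N) := by
    rw [card_range, degree_lt_iff_coeff_zero]
    intro m hm
    rcases hm.eq_or_lt with rfl | hm
    · simp [hωlead]
    · rw [coeff_sub, coeff_C_mul, coeff_eq_zero_of_natDegree_lt (hdeg.trans_lt hm),
        coeff_eq_zero_of_natDegree_lt (hωdeg.trans_lt hm), mul_zero, sub_zero]
  have hinterp := Lagrange.eq_interpolate_of_eval_eq (fun j => p.eval (z j)) hz.injOn hlt
    fun j hj => by rw [eval_sub, eval_mul, Lagrange.eval_nodal_at_node hj, mul_zero, sub_zero]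
  rw [sub_eq_iff_eq_add, Lagrange.interpolate_apply] at hinterp
  rw [hinterp]
  refine add_mem (sum_mem fun j hj => ?_) (mul_mem (C_mem_nonnegCoeffs hlead)
    (prod_mem fun i hi => X_sub_C_mem_nonnegCoeffs (hz0 i (mem_range.1 hi))))
  have hj := mem_range.1 hj
  have hsplit : p.eval (z j) = (-1) ^ j * p.eval (z j) * (-1) ^ j := by
    rw [mul_right_comm, ← pow_add, Even.neg_one_pow ⟨j, rfl⟩, one_mul]
  rw [hsplit, C_mul, mul_assoc]
  exact mul_mem (C_mem_nonnegCoeffs (hp j hj))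
    (neg_one_pow_mul_lagrangeBasis_mem_nonnegCoeffs hz hz0 hj)

end NonnegCoeffs

section ImaginaryAxis

open Complex

lemma eq_expand_contract_add {R : Type*} [CommSemiring R] (p : R[X]) :
    p = expand R 2 (contract 2 p) + X * expand R 2 (contract 2 (divX p)) := by
  ext i
  rw [coeff_add, coeff_expand two_pos]
  rcases i with _ | i
  · simp [coeff_contract two_ne_zero]
  rw [coeff_X_mul, coeff_expand two_pos, coeff_contract two_ne_zero, coeff_contract two_ne_zero,
    coeff_divX]
  have hodd (m : ℕ) : ¬ 2 ∣ 2 * m + 1 := by omega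
  rcases Nat.even_or_odd' i with ⟨m, rfl | rfl⟩
  · simp [hodd, mul_comm m 2]
  · have hsucc : 2 * m + 1 + 1 = (m + 1) * 2 := by ring
    simp [hodd, hsucc]

lemma aeval_complex_ofReal (p : ℝ[X]) (x : ℝ) : aeval (x : ℂ) p = (p.eval x : ℝ) :=
  aeval_algebraMap_apply_eq_algebraMap_eval x p

lemma aeval_ofReal_mul_I (p : ℝ[X]) (u : ℝ) :
    aeval (u * I) p = ⟨(contract 2 p).eval (-u ^ 2), u * (contract 2 (divX p)).eval (-u ^ 2)⟩ := by
  have hsq : ((u : ℂ) * I) ^ 2 = ((-u ^ 2 : ℝ) : ℂ) := by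
    rw [mul_pow, I_sq]
    push_cast
    ring
  conv_lhs => rw [eq_expand_contract_add p]
  rw [map_add, map_mul, expand_aeval, expand_aeval, aeval_X, hsq, aeval_complex_ofReal,
    aeval_complex_ofReal, mk_eq_add_mul_I, ofReal_mul]
  ring

lemma strictAntiOn_neg_sq {K ι : Type*} [Ring K] [LinearOrder K] [IsStrictOrderedRing K]
    [Preorder ι] {s : Set ι} {u : ι → K} (hu : StrictMonoOn u s) (hu0 : ∀ i ∈ s, 0 ≤ u i) :
    StrictAntiOn (fun i => -u i ^ 2) s := fun i hi _ hj hij =>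
  neg_lt_neg (pow_lt_pow_left₀ (hu hi hj hij) (hu0 i hi) two_ne_zero)

variable {N : ℕ} {u : ℕ → ℝ} {p : ℝ[X]}

lemma coeff_two_mul_nonneg_of_alternating (hu : StrictMonoOn u (range N)) (hu0 : ∀ j < N, 0 ≤ u j)
    (hdeg : p.natDegree ≤ 2 * N + 1) (hlead : 0 ≤ p.coeff (2 * N))
    (hp : ∀ j < N, 0 ≤ (-1) ^ j * (aeval (u j * I) p).re) (l : ℕ) : 0 ≤ p.coeff (2 * l) := by
  have hcoeff (m : ℕ) : (contract 2 p).coeff m = p.coeff (2 * m) := by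
    rw [coeff_contract two_ne_zero, mul_comm]
  rw [← hcoeff] at hlead ⊢
  refine mem_nonnegCoeffs_of_alternating
    (strictAntiOn_neg_sq hu fun j hj => hu0 j (mem_range.1 hj))
    (fun j _ => neg_nonpos.2 (sq_nonneg _)) ?_ hlead (fun j hj => ?_) l
  · refine natDegree_le_iff_coeff_eq_zero.2 fun m hm => ?_
    rw [hcoeff]
    exact coeff_eq_zero_of_natDegree_lt (by omega)
  · simpa [aeval_ofReal_mul_I] using hp j hj

lemma coeff_two_mul_add_one_nonneg_of_alternating (hu : StrictMonoOn u (range N))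
    (hu0 : ∀ j < N, 0 < u j) (hdeg : p.natDegree ≤ 2 * N + 2) (hlead : 0 ≤ p.coeff (2 * N + 1))
    (hp : ∀ j < N, 0 ≤ (-1) ^ j * (aeval (u j * I) p).im) (l : ℕ) :
    0 ≤ p.coeff (2 * l + 1) := by
  have hcoeff (m : ℕ) : (contract 2 (divX p)).coeff m = p.coeff (2 * m + 1) := by
    rw [coeff_contract two_ne_zero, coeff_divX, mul_comm]
  rw [← hcoeff] at hlead ⊢
  refine mem_nonnegCoeffs_of_alternating
    (strictAntiOn_neg_sq hu fun j hj => (hu0 j (mem_range.1 hj)).le)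
    (fun j _ => neg_nonpos.2 (sq_nonneg _)) ?_ hlead (fun j hj => ?_) l
  · refine natDegree_le_iff_coeff_eq_zero.2 fun m hm => ?_
    rw [hcoeff]
    exact coeff_eq_zero_of_natDegree_lt (by omega)
  · refine nonneg_of_mul_nonneg_right ?_ (hu0 j hj)
    simpa [aeval_ofReal_mul_I, mul_left_comm] using hp j hj

end ImaginaryAxis

section ImaginaryNodes

open Real

lemma cosh_arsinh_tan {ψ : ℝ} (hψ : 0 < cos ψ) : cosh (arsinh (tan ψ)) = (cos ψ)⁻¹ := by
  rw [cosh_arsinh, ← inv_sqrt_one_add_tan_sq hψ, inv_inv]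

lemma complex_cos_sub_arsinh_tan_mul_I {ψ : ℝ} (hψ : 0 < cos ψ) :
    Complex.cos (ψ - arsinh (tan ψ) * Complex.I) =
      1 + (sin ψ * tan ψ : ℝ) * Complex.I := by
  rw [Complex.cos_sub, Complex.cos_mul_I, Complex.sin_mul_I, ← Complex.ofReal_cosh,
    ← Complex.ofReal_sinh, ← Complex.ofReal_cos, ← Complex.ofReal_sin, sinh_arsinh,
    cosh_arsinh_tan hψ, ← Complex.ofReal_mul, mul_inv_cancel₀ hψ.ne']
  push_cast
  ring

lemma aeval_taylor_one_chebyshevT {ψ : ℝ} (hψ : 0 < cos ψ) (n : ℕ) :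
    aeval ((sin ψ * tan ψ : ℝ) * Complex.I) (taylor 1 (Chebyshev.T ℝ n)) =
      ⟨cos (n * ψ) * cosh (n * arsinh (tan ψ)), sin (n * ψ) * sinh (n * arsinh (tan ψ))⟩ := by
  rw [taylor_apply, aeval_comp, map_add, aeval_X, aeval_C, map_one, add_comm,
    ← complex_cos_sub_arsinh_tan_mul_I hψ, Chebyshev.aeval_T, Chebyshev.T_complex_cos,
    Int.cast_natCast, mul_sub, Complex.cos_sub, ← mul_assoc, Complex.cos_mul_I, Complex.sin_mul_I,
    Complex.mk_eq_add_mul_I]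
  push_cast
  ring

lemma strictMonoOn_sin_mul_tan : StrictMonoOn (fun ψ => sin ψ * tan ψ) (Set.Ico 0 (π / 2)) := by
  intro a ha b hb hab
  have hsin : sin a < sin b :=
    sin_lt_sin_of_lt_of_le_pi_div_two (by linarith [ha.1, pi_pos]) hb.2.le hab
  have htan : tan a < tan b := tan_lt_tan_of_nonneg_of_lt_pi_div_two ha.1 hb.2 hab
  exact mul_lt_mul'' hsin htan (sin_nonneg_of_nonneg_of_le_pi ha.1 (by linarith [ha.2, pi_pos]))
    (tan_nonneg_of_nonneg_of_le_pi_div_two ha.1 ha.2.le)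

end ImaginaryNodes

section Comparison

open Real

lemma natDegree_taylor_one_chebyshevT (n : ℕ) : (taylor 1 (Chebyshev.T ℝ n)).natDegree = n := by
  rw [natDegree_taylor, Chebyshev.natDegree_T, Int.natAbs_natCast]

lemma coeff_taylor_one_chebyshevT_self (n : ℕ) :
    (taylor 1 (Chebyshev.T ℝ n)).coeff n = 2 ^ (n - 1) := by
  rw [← Int.natAbs_natCast n, ← Chebyshev.leadingCoeff_T ℝ n, ← leadingCoeff_taylor 1,
    leadingCoeff, natDegree_taylor_one_chebyshevT, Int.natAbs_natCast]

/-- The angles `m π / (2 n)`. At the corresponding points `imaginaryNode n m` of the imaginary axis,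
the value of `T_n (1 + X)` is real for even `m` and purely imaginary for odd `m`. -/
noncomputable def nodeAngle (n m : ℕ) : ℝ := m * π / (2 * n)

lemma nodeAngle_mem_Ico {n m : ℕ} (h : m < n) : nodeAngle n m ∈ Set.Ico 0 (π / 2) := by
  have hn : (0 : ℝ) < n := Nat.cast_pos.2 (by omega)
  have h : (m : ℝ) < n := Nat.cast_lt.2 h
  refine ⟨by unfold nodeAngle; positivity, ?_⟩
  rw [nodeAngle, div_lt_div_iff₀ (by positivity) two_pos]
  nlinarith [pi_pos]

lemma nodeAngle_lt_nodeAngle {n a b : ℕ} (hn : n ≠ 0) (hab : a < b) :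
    nodeAngle n a < nodeAngle n b := by
  unfold nodeAngle
  gcongr

lemma cos_nodeAngle_pos {n m : ℕ} (h : m < n) : 0 < cos (nodeAngle n m) :=
  cos_pos_of_mem_Ioo ⟨by linarith [(nodeAngle_mem_Ico h).1, pi_pos], (nodeAngle_mem_Ico h).2⟩

lemma cast_mul_nodeAngle {n : ℕ} (hn : n ≠ 0) (m : ℕ) : n * nodeAngle n m = m * π / 2 := by
  have : (n : ℝ) ≠ 0 := Nat.cast_ne_zero.2 hn
  unfold nodeAngle
  field_simp

lemma cos_mul_nodeAngle_two_mul {n : ℕ} (hn : n ≠ 0) (j : ℕ) :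
    cos (n * nodeAngle n (2 * j)) = (-1) ^ j := by
  rw [cast_mul_nodeAngle hn, ← cos_nat_mul_pi]
  congr 1
  push_cast
  ring

lemma sin_mul_nodeAngle_two_mul_add_one {n : ℕ} (hn : n ≠ 0) (j : ℕ) :
    sin (n * nodeAngle n (2 * j + 1)) = (-1) ^ j := by
  rw [cast_mul_nodeAngle hn, ← cos_nat_mul_pi, ← sin_add_pi_div_two]
  congr 1
  push_cast
  ring

/-- The imaginary part of the solution `z` of `1 + z = cos (ψ - I * η)`, where `ψ` is the angle
`nodeAngle n m` and `η` is chosen so that `z` is purely imaginary: `sinh η = tan ψ`. -/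
noncomputable def imaginaryNode (n m : ℕ) : ℝ := sin (nodeAngle n m) * tan (nodeAngle n m)

lemma imaginaryNode_lt_imaginaryNode {n a b : ℕ} (hab : a < b) (hb : b < n) :
    imaginaryNode n a < imaginaryNode n b :=
  strictMonoOn_sin_mul_tan (nodeAngle_mem_Ico (hab.trans hb)) (nodeAngle_mem_Ico hb)
    (nodeAngle_lt_nodeAngle (by omega) hab)

lemma imaginaryNode_zero (n : ℕ) : imaginaryNode n 0 = 0 := by simp [imaginaryNode, nodeAngle]

lemma imaginaryNode_pos {n m : ℕ} (hm : 0 < m) (h : m < n) : 0 < imaginaryNode n m :=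
  (imaginaryNode_zero n).symm.trans_lt (imaginaryNode_lt_imaginaryNode hm h)

lemma imaginaryNode_nonneg {n m : ℕ} (h : m < n) : 0 ≤ imaginaryNode n m := by
  rcases m.eq_zero_or_pos with rfl | hm
  exacts [(imaginaryNode_zero n).ge, (imaginaryNode_pos hm h).le]

lemma neg_one_pow_mul_sub_nonneg {K : Type*} [CommRing K] [LinearOrder K] [IsStrictOrderedRing K]
    {a b : K} (h : |b| ≤ a) (j : ℕ) : 0 ≤ (-1) ^ j * ((-1) ^ j * a - b) := by
  rcases neg_one_pow_eq_or K j with hj | hj <;> rw [hj] <;> linarith [abs_le.1 h]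

/-- The bounds on a polynomial `R` under which its coefficients are compared with those of
`T_n (1 + X)`: one on the leading coefficient, and one at the points `I * sin ψ * tan ψ`, where
`T_n (1 + X)` takes the value `cos (n (ψ - I η))` with `sinh η = tan ψ`. -/
structure IsChebyshevDominated (n : ℕ) (R : ℝ[X]) : Prop where
  natDegree_le : R.natDegree ≤ n
  abs_coeff_self_le : |R.coeff n| ≤ 2 ^ (n - 1)
  abs_re_le : ∀ ψ ∈ Set.Ico 0 (π / 2),
    |(aeval ((sin ψ * tan ψ : ℝ) * Complex.I) R).re| ≤ cosh (n * arsinh (tan ψ))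
  abs_im_le : ∀ ψ ∈ Set.Ico 0 (π / 2),
    |(aeval ((sin ψ * tan ψ : ℝ) * Complex.I) R).im| ≤ sinh (n * arsinh (tan ψ))

namespace IsChebyshevDominated

variable {n : ℕ} {R : ℝ[X]}

lemma neg (hR : IsChebyshevDominated n R) : IsChebyshevDominated n (-R) where
  natDegree_le := (natDegree_neg R).trans_le hR.natDegree_le
  abs_coeff_self_le := by simpa using hR.abs_coeff_self_le
  abs_re_le := by simpa using hR.abs_re_le
  abs_im_le := by simpa using hR.abs_im_le

lemma natDegree_taylor_sub_le (hR : IsChebyshevDominated n R) :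
    (taylor 1 (Chebyshev.T ℝ n) - R).natDegree ≤ n :=
  (natDegree_sub_le_of_le (natDegree_taylor_one_chebyshevT n).le hR.natDegree_le).trans
    (max_self n).le

lemma coeff_taylor_sub_nonneg (hR : IsChebyshevDominated n R) {m : ℕ} (hm : n ≤ m) :
    0 ≤ (taylor 1 (Chebyshev.T ℝ n) - R).coeff m := by
  rcases hm.eq_or_lt with rfl | hm
  · rw [coeff_sub, coeff_taylor_one_chebyshevT_self, sub_nonneg]
    exact le_of_abs_le hR.abs_coeff_self_le
  · rw [coeff_eq_zero_of_natDegree_lt (hR.natDegree_taylor_sub_le.trans_lt hm)]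

lemma alternating_re (hR : IsChebyshevDominated n R) {j : ℕ} (hj : 2 * j < n) :
    0 ≤ (-1) ^ j * (aeval (imaginaryNode n (2 * j) * Complex.I)
      (taylor 1 (Chebyshev.T ℝ n) - R)).re := by
  rw [map_sub, Complex.sub_re, imaginaryNode, aeval_taylor_one_chebyshevT (cos_nodeAngle_pos hj),
    cos_mul_nodeAngle_two_mul (by omega)]
  exact neg_one_pow_mul_sub_nonneg (hR.abs_re_le _ (nodeAngle_mem_Ico hj)) j

lemma alternating_im (hR : IsChebyshevDominated n R) {j : ℕ} (hj : 2 * j + 1 < n) :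
    0 ≤ (-1) ^ j * (aeval (imaginaryNode n (2 * j + 1) * Complex.I)
      (taylor 1 (Chebyshev.T ℝ n) - R)).im := by
  rw [map_sub, Complex.sub_im, imaginaryNode, aeval_taylor_one_chebyshevT (cos_nodeAngle_pos hj),
    sin_mul_nodeAngle_two_mul_add_one (by omega)]
  exact neg_one_pow_mul_sub_nonneg (hR.abs_im_le _ (nodeAngle_mem_Ico hj)) j

lemma coeff_le (hR : IsChebyshevDominated n R) (k : ℕ) :
    R.coeff k ≤ (taylor 1 (Chebyshev.T ℝ n)).coeff k := by
  have hdeg := hR.natDegree_taylor_sub_le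
  rw [← sub_nonneg, ← coeff_sub]
  rcases k.even_or_odd' with ⟨l, rfl | rfl⟩
  · have hlt {j : ℕ} (hj : j ∈ range ((n + 1) / 2)) : 2 * j < n := by
      have := mem_range.1 hj
      omega
    exact coeff_two_mul_nonneg_of_alternating (u := fun j => imaginaryNode n (2 * j))
      (fun a _ b hb hab => imaginaryNode_lt_imaginaryNode (by omega) (hlt hb))
      (fun j hj => imaginaryNode_nonneg (hlt (mem_range.2 hj))) (hdeg.trans (by omega))
      (hR.coeff_taylor_sub_nonneg (by omega))
      (fun j hj => hR.alternating_re (hlt (mem_range.2 hj))) l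
  · have hlt {j : ℕ} (hj : j ∈ range (n / 2)) : 2 * j + 1 < n := by
      have := mem_range.1 hj
      omega
    exact coeff_two_mul_add_one_nonneg_of_alternating (u := fun j => imaginaryNode n (2 * j + 1))
      (fun a _ b hb hab => imaginaryNode_lt_imaginaryNode (by omega) (hlt hb))
      (fun j hj => imaginaryNode_pos (by omega) (hlt (mem_range.2 hj))) (hdeg.trans (by omega))
      (hR.coeff_taylor_sub_nonneg (by omega))
      (fun j hj => hR.alternating_im (hlt (mem_range.2 hj))) l

theorem abs_coeff_le_coeff (hR : IsChebyshevDominated n R) (k : ℕ) :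
    |R.coeff k| ≤ (taylor 1 (Chebyshev.T ℝ n)).coeff k :=
  abs_le'.2 ⟨hR.coeff_le k, (coeff_neg R k).symm.trans_le (hR.neg.coeff_le k)⟩

end IsChebyshevDominated

end Comparison

section Hyperbolic

open Real

variable {n : ℕ}

lemma abs_eval_cosh_le {A : ℝ[X]} (hdeg : A.degree ≤ n)
    (hA : ∀ θ, |A.eval (cos θ)| ≤ 1) (η : ℝ) : |A.eval (cosh η)| ≤ cosh (n * η) := by
  have hle {B : ℝ[X]} (hdeg : B.degree ≤ n) (hB : ∀ θ, |B.eval (cos θ)| ≤ 1) :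
      B.eval (cosh η) ≤ cosh (n * η) := by
    have h := Chebyshev.eval_iterate_derivative_le_of_forall_abs_le_one (k := 0) (one_le_cosh η)
      hdeg fun x hx => cos_arccos hx.1 hx.2 ▸ hB (arccos x)
    simpa only [Function.iterate_zero_apply, Chebyshev.T_real_cosh, Int.cast_natCast] using h
  rw [abs_le', ← eval_neg]
  exact ⟨hle hdeg hA, hle ((degree_neg A).trans_le hdeg) (by simpa using hA)⟩

-- If `|sin θ * B (cos θ)| ≤ 1`, then the polynomial `1 - 2 (1 - X²) B²` of degree at most `2 n`
-- is bounded by `1` on `[-1, 1]`, as `cos (2 θ) = 1 - 2 sin² θ` suggests.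
lemma abs_sinh_mul_eval_cosh_le {B : ℝ[X]} (hdeg : B.degree < n)
    (hB : ∀ θ, |sin θ * B.eval (cos θ)| ≤ 1) (η : ℝ) :
    |sinh η * B.eval (cosh η)| ≤ |sinh (n * η)| := by
  rcases eq_or_ne B 0 with rfl | hB0
  · simp
  set A : ℝ[X] := 1 - 2 * (1 - X ^ 2) * B ^ 2
  have hA (θ : ℝ) : |A.eval (cos θ)| ≤ 1 := by
    have hval : A.eval (cos θ) = 1 - 2 * (sin θ * B.eval (cos θ)) ^ 2 := by
      simp only [A, eval_sub, eval_mul, eval_pow, eval_one, eval_X, eval_ofNat, mul_pow, sin_sq,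
        mul_assoc]
    have := (sq_le_one_iff_abs_le_one _).2 (hB θ)
    rw [hval, abs_le]
    constructor <;> linarith [sq_nonneg (sin θ * B.eval (cos θ))]
  have hAdeg : A.natDegree ≤ 2 * n := by
    have hBdeg := (natDegree_lt_iff_degree_lt hB0).2 hdeg
    have hle : A.natDegree ≤ 2 + 2 * B.natDegree := by
      unfold A
      compute_degree
    omega
  have h := abs_eval_cosh_le (n := 2 * n) (natDegree_le_iff_degree_le.1 hAdeg) hA η
  have hval : A.eval (cosh η) = 1 + 2 * (sinh η * B.eval (cosh η)) ^ 2 := by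
    simp only [A, eval_sub, eval_mul, eval_pow, eval_one, eval_X, eval_ofNat, mul_pow, sinh_sq]
    ring
  rw [hval, Nat.cast_mul, Nat.cast_ofNat, mul_assoc, cosh_two_mul, cosh_sq] at h
  exact sq_le_sq.1 (by linarith [le_of_abs_le h])

end Hyperbolic

section Bivariate

open Real

-- Reflecting `θ` separates the even and the odd part.
lemma abs_le_of_abs_eval_cos_add_sin_mul_eval_cos_le {A B : ℝ[X]} {M : ℝ}
    (h : ∀ θ, |A.eval (cos θ) + sin θ * B.eval (cos θ)| ≤ M) (θ : ℝ) :
    |A.eval (cos θ)| ≤ M ∧ |sin θ * B.eval (cos θ)| ≤ M := by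
  have hpos := abs_le.1 (h θ)
  have hneg := abs_le.1 (h (-θ))
  rw [cos_neg, sin_neg, neg_mul] at hneg
  simp only [abs_le]
  refine ⟨⟨?_, ?_⟩, ?_, ?_⟩ <;> linarith

universe v

lemma exists_pow_mul_pow_eq_add_mul (R : Type*) [CommRing R] (i j : ℕ) :
    ∃ A ∈ degreeLE R (i + j : ℕ), ∃ B ∈ degreeLT R (i + j),
      ∀ {S : Type v} [CommRing S] [Algebra R S] {c s : S}, c ^ 2 + s ^ 2 = 1 →
        c ^ i * s ^ j = aeval c A + s * aeval c B := by
  obtain ⟨m, rfl | rfl⟩ := j.even_or_odd'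
  all_goals
    have hdeg : (X ^ i * (1 - X ^ 2) ^ m : R[X]).natDegree ≤ i + 2 * m := by
      compute_degree
      omega
  · refine ⟨X ^ i * (1 - X ^ 2) ^ m, mem_degreeLE.2 (natDegree_le_iff_degree_le.1 hdeg), 0,
      zero_mem _, fun {S} _ _ {c s} h => ?_⟩
    simp [pow_mul, eq_sub_of_add_eq' h]
  · refine ⟨0, zero_mem _, X ^ i * (1 - X ^ 2) ^ m, mem_degreeLT.2 ?_, fun {S} _ _ {c s} h => ?_⟩
    · exact (natDegree_le_iff_degree_le.1 hdeg).trans_lt (by exact_mod_cast Nat.lt_succ_self _)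
    · simp [pow_succ, pow_mul, eq_sub_of_add_eq' h]
      ring

lemma exists_aeval_eq_add_mul {R : Type*} [CommRing R] {n : ℕ} {F : MvPolynomial (Fin 2) R}
    (hF : F.totalDegree ≤ n) (a b : R) :
    ∃ A ∈ degreeLE R n, ∃ B ∈ degreeLT R n,
      ∀ {S : Type v} [CommRing S] [Algebra R S] {c s : S}, c ^ 2 + s ^ 2 = 1 →
        MvPolynomial.aeval ![a • c, b • s] F = aeval c A + s * aeval c B := by
  choose A hA B hB hAB using exists_pow_mul_pow_eq_add_mul.{v} R
  have hle {m : Fin 2 →₀ ℕ} (hm : m ∈ F.support) : m 0 + m 1 ≤ n := by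
    have := (MvPolynomial.le_totalDegree hm).trans hF
    rwa [Finsupp.sum_fintype _ _ fun _ => rfl, Fin.sum_univ_two] at this
  refine ⟨∑ m ∈ F.support, (F.coeff m * a ^ m 0 * b ^ m 1) • A (m 0) (m 1),
    sum_mem fun m hm => Submodule.smul_mem _ _ (degreeLE_mono (mod_cast hle hm) (hA _ _)),
    ∑ m ∈ F.support, (F.coeff m * a ^ m 0 * b ^ m 1) • B (m 0) (m 1),
    sum_mem fun m hm => Submodule.smul_mem _ _ (degreeLT_mono (hle hm) (hB _ _)),
    fun {S} _ _ {c s} h => ?_⟩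
  simp only [MvPolynomial.aeval_def, MvPolynomial.eval₂_eq', Fin.prod_univ_two, map_sum, map_smul,
    mul_sum, ← sum_add_distrib, mul_smul_comm, ← smul_add, ← hAB _ _ h]
  refine sum_congr rfl fun m _ => ?_
  simp only [Matrix.cons_val_zero, Matrix.cons_val_one, Algebra.smul_def, map_mul, map_pow]
  ring

lemma abs_cos_mul_cos_add_abs_sin_mul_sin_le_one (ψ θ : ℝ) :
    |cos ψ * cos θ| + |sin ψ * sin θ| ≤ 1 := by
  have hsub := abs_le.1 (abs_cos_le_one (ψ - θ))
  have hadd := abs_le.1 (abs_cos_le_one (ψ + θ))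
  rw [cos_sub] at hsub
  rw [cos_add] at hadd
  rcases abs_choice (cos ψ * cos θ) with h | h <;>
    rcases abs_choice (sin ψ * sin θ) with h' | h' <;> rw [h, h'] <;> linarith

/-- A real polynomial in two variables of degree at most `n` that is bounded by `1` on the unit
ball of the `ℓ¹` norm. -/
structure IsBoundedOnCross (n : ℕ) (F : MvPolynomial (Fin 2) ℝ) : Prop where
  totalDegree_le : F.totalDegree ≤ n
  abs_eval_le : ∀ s t, |s| + |t| ≤ 1 → |MvPolynomial.eval ![s, t] F| ≤ 1

/-- The univariate polynomial `F (a, X)`. -/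
noncomputable def verticalSlice {R : Type*} [CommSemiring R] (a : R) (F : MvPolynomial (Fin 2) R) :
    R[X] :=
  MvPolynomial.aeval ![C a, X] F

section Slice

variable {R : Type*} [CommSemiring R] {n : ℕ} {F : MvPolynomial (Fin 2) R}

lemma aeval_verticalSlice {S : Type*} [CommSemiring S] [Algebra R S] (a : R) (z : S) :
    aeval z (verticalSlice a F) = MvPolynomial.aeval ![algebraMap R S a, z] F := by
  rw [verticalSlice, MvPolynomial.comp_aeval_apply]
  congr 2
  ext i
  fin_cases i <;> simp

lemma eval_verticalSlice (a t : R) : (verticalSlice a F).eval t = MvPolynomial.eval ![a, t] F :=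
  aeval_verticalSlice a t

lemma natDegree_verticalSlice_le (hF : F.totalDegree ≤ n) (a : R) :
    (verticalSlice a F).natDegree ≤ n := by
  have hvars (i : Fin 2) : (![C a, X] i : R[X]).natDegree ≤ 1 := by
    fin_cases i
    exacts [(natDegree_C a).trans_le zero_le_one, natDegree_X_le]
  exact (MvPolynomial.aeval_natDegree_le F hF _ hvars).trans (mul_one n).le

lemma coeff_verticalSlice (hF : F.totalDegree ≤ n) (a : R) :
    (verticalSlice a F).coeff n = F.coeff (Finsupp.single 1 n) := by
  have hterm (m : Fin 2 →₀ ℕ) : (C (F.coeff m) * (C a ^ m 0 * X ^ m 1)).coeff n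
      = if m 1 = n then F.coeff m * a ^ m 0 else 0 := by
    rw [← C_pow, ← mul_assoc, ← C_mul, coeff_C_mul_X_pow]
    simp only [eq_comm]
  rw [verticalSlice, MvPolynomial.aeval_def, MvPolynomial.eval₂_eq', finsetSum_coeff]
  simp only [Fin.prod_univ_two, Polynomial.algebraMap_apply, Algebra.algebraMap_self,
    RingHom.id_apply, Matrix.cons_val_zero, Matrix.cons_val_one, hterm]
  refine (sum_eq_single (Finsupp.single 1 n) (fun m hm hne => if_neg fun h1 => hne ?_)
    fun h => ?_).trans ?_
  · have hm := (MvPolynomial.le_totalDegree hm).trans hF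
    rw [Finsupp.sum_fintype _ _ fun _ => rfl, Fin.sum_univ_two] at hm
    ext i
    fin_cases i
    · simpa using (by omega : m 0 = 0)
    · simpa using h1
  · simp [MvPolynomial.notMem_support_iff.1 h]
  · simp

end Slice

namespace IsBoundedOnCross

variable {n : ℕ} {F : MvPolynomial (Fin 2) ℝ}

lemma abs_coeff_verticalSlice_le (hF : IsBoundedOnCross n F) (a : ℝ) :
    |(verticalSlice a F).coeff n| ≤ 2 ^ (n - 1) := by
  have hdeg := natDegree_le_iff_degree_le.1 (natDegree_verticalSlice_le hF.totalDegree_le 0)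
  have hbound (t : ℝ) (ht : t ∈ Set.Icc (-1) 1) : |(verticalSlice 0 F).eval t| ≤ 1 := by
    rw [eval_verticalSlice]
    exact hF.abs_eval_le 0 t (by simpa [abs_le] using ht)
  rw [coeff_verticalSlice hF.totalDegree_le, ← coeff_verticalSlice hF.totalDegree_le 0, abs_le',
    ← coeff_neg]
  exact ⟨Chebyshev.coeff_le_of_forall_abs_le_one hdeg hbound,
    Chebyshev.coeff_le_of_forall_abs_le_one ((degree_neg _).trans_le hdeg) (by simpa using hbound)⟩

-- With `c = cosh η` and `s = I * sinh η`, the point `(cos ψ * c, sin ψ * s)` is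
-- `(1, I * sin ψ * tan ψ)` when `cosh η = (cos ψ)⁻¹`.
lemma exists_aeval_verticalSlice_eq (hF : IsBoundedOnCross n F) {ψ : ℝ} (hψ : 0 < cos ψ) :
    ∃ A B : ℝ[X], A.degree ≤ n ∧ B.degree < n ∧ (∀ θ, |A.eval (cos θ)| ≤ 1) ∧
      (∀ θ, |sin θ * B.eval (cos θ)| ≤ 1) ∧
      aeval ((sin ψ * tan ψ : ℝ) * Complex.I) (verticalSlice 1 F) =
        ⟨A.eval (cosh (arsinh (tan ψ))),
          sinh (arsinh (tan ψ)) * B.eval (cosh (arsinh (tan ψ)))⟩ := by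
  obtain ⟨A, hA, B, hB, hAB⟩ := exists_aeval_eq_add_mul hF.totalDegree_le (cos ψ) (sin ψ)
  have hreal (θ : ℝ) : |A.eval (cos θ) + sin θ * B.eval (cos θ)| ≤ 1 := by
    rw [← coe_aeval_eq_eval, ← hAB (cos_sq_add_sin_sq θ)]
    exact hF.abs_eval_le _ _ (abs_cos_mul_cos_add_abs_sin_mul_sin_le_one ψ θ)
  have hparts := abs_le_of_abs_eval_cos_add_sin_mul_eval_cos_le hreal
  refine ⟨A, B, mem_degreeLE.1 hA, mem_degreeLT.1 hB, fun θ => (hparts θ).1, fun θ => (hparts θ).2,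
    ?_⟩
  have hcircle :
      (cosh (arsinh (tan ψ)) : ℂ) ^ 2 + (sinh (arsinh (tan ψ)) * Complex.I) ^ 2 = 1 := by
    rw [mul_pow, Complex.I_sq, mul_neg_one, ← sub_eq_add_neg]
    exact_mod_cast cosh_sq_sub_sinh_sq (arsinh (tan ψ))
  have hpoint : ![algebraMap ℝ ℂ 1, (sin ψ * tan ψ : ℝ) * Complex.I] =
      ![cos ψ • (cosh (arsinh (tan ψ)) : ℂ),
        sin ψ • (sinh (arsinh (tan ψ)) * Complex.I : ℂ)] := by
    rw [sinh_arsinh, cosh_arsinh_tan hψ, map_one, Complex.real_smul, Complex.real_smul,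
      ← Complex.ofReal_mul, mul_inv_cancel₀ hψ.ne', Complex.ofReal_one, Complex.ofReal_mul,
      mul_assoc]
  rw [aeval_verticalSlice, hpoint, hAB hcircle, aeval_complex_ofReal, aeval_complex_ofReal,
    Complex.mk_eq_add_mul_I, Complex.ofReal_mul, mul_right_comm]

theorem isChebyshevDominated_verticalSlice (hF : IsBoundedOnCross n F) :
    IsChebyshevDominated n (verticalSlice 1 F) where
  natDegree_le := natDegree_verticalSlice_le hF.totalDegree_le 1
  abs_coeff_self_le := hF.abs_coeff_verticalSlice_le 1
  abs_re_le ψ hψ := by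
    have hcos : 0 < cos ψ := cos_pos_of_mem_Ioo ⟨by linarith [hψ.1, pi_pos], hψ.2⟩
    obtain ⟨A, B, hAdeg, -, hA, -, h⟩ := hF.exists_aeval_verticalSlice_eq hcos
    rw [h]
    exact abs_eval_cosh_le hAdeg hA _
  abs_im_le ψ hψ := by
    have hcos : 0 < cos ψ := cos_pos_of_mem_Ioo ⟨by linarith [hψ.1, pi_pos], hψ.2⟩
    have hη : 0 ≤ arsinh (tan ψ) :=
      arsinh_nonneg_iff.2 (tan_nonneg_of_nonneg_of_le_pi_div_two hψ.1 hψ.2.le)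
    obtain ⟨A, B, -, hBdeg, -, hB, h⟩ := hF.exists_aeval_verticalSlice_eq hcos
    rw [h, ← abs_of_nonneg (sinh_nonneg_iff.2 (mul_nonneg n.cast_nonneg hη))]
    exact abs_sinh_mul_eval_cosh_le hBdeg hB _

end IsBoundedOnCross

end Bivariate

section PolynomialMaps

/-- Continuous polynomials of degree at most `n`: sums of `j`-homogeneous polynomials
`x ↦ L j (x, …, x)` for `j ≤ n`, where the form `L j` need not be symmetric. -/
def IsPolynomialOfDegreeLE (𝕜 : Type*) {E F : Type*} [NontriviallyNormedField 𝕜]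
    [NormedAddCommGroup E] [NormedSpace 𝕜 E] [NormedAddCommGroup F] [NormedSpace 𝕜 F]
    (n : ℕ) (P : E → F) : Prop :=
  ∃ L : (j : Fin (n + 1)) → ContinuousMultilinearMap 𝕜 (fun _ : Fin (j : ℕ) => E) F,
    ∀ x, P x = ∑ j, L j (fun _ => x)

namespace IsPolynomialOfDegreeLE

variable {𝕜 E F : Type*} [NontriviallyNormedField 𝕜] [NormedAddCommGroup E] [NormedSpace 𝕜 E]
  [NormedAddCommGroup F] [NormedSpace 𝕜 F] {n : ℕ}

lemma contDiff {P : E → F} (hP : IsPolynomialOfDegreeLE 𝕜 n P) {m : WithTop ℕ∞} :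
    ContDiff 𝕜 m P := by
  obtain ⟨L, hL⟩ := hP
  rw [funext hL]
  exact ContDiff.sum fun j _ => (L j).contDiff.comp (contDiff_pi.2 fun _ => contDiff_id)

lemma exists_mvPolynomial {P : E → 𝕜} (hP : IsPolynomialOfDegreeLE 𝕜 n P) {σ : Type*} [Fintype σ]
    (v : σ → E) : ∃ F : MvPolynomial σ 𝕜, F.totalDegree ≤ n ∧
      ∀ s, MvPolynomial.eval s F = P (∑ i, s i • v i) := by
  classical
  obtain ⟨L, hL⟩ := hP
  refine ⟨∑ j : Fin (n + 1), ∑ r : Fin j → σ,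
      MvPolynomial.C (L j (v ∘ r)) * ∏ i, MvPolynomial.X (r i),
    MvPolynomial.totalDegree_finsetSum_le fun j _ =>
      MvPolynomial.totalDegree_finsetSum_le fun r _ => ?_, fun s => ?_⟩
  · calc (MvPolynomial.C (L j (v ∘ r)) * ∏ i, MvPolynomial.X (r i)).totalDegree
        ≤ 0 + ∑ i : Fin j, (MvPolynomial.X (R := 𝕜) (r i)).totalDegree :=
          (MvPolynomial.totalDegree_mul _ _).trans (add_le_add (MvPolynomial.totalDegree_C _).le
            (MvPolynomial.totalDegree_finsetProd _ _))
      _ = j := by simp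
      _ ≤ n := Nat.lt_succ_iff.1 j.2
  · rw [hL, map_sum]
    refine sum_congr rfl fun j _ => ?_
    rw [(L j).map_sum, map_sum]
    refine sum_congr rfl fun r _ => ?_
    rw [(L j).map_smul_univ, smul_eq_mul, mul_comm]
    simp [Function.comp_def]

end IsPolynomialOfDegreeLE

lemma iteratedFDeriv_apply_const {𝕜 E F : Type*} [NontriviallyNormedField 𝕜]
    [NormedAddCommGroup E] [NormedSpace 𝕜 E] [NormedAddCommGroup F] [NormedSpace 𝕜 F]
    {f : E → F} {k : ℕ} (hf : ContDiff 𝕜 k f) (x y : E) :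
    iteratedFDeriv 𝕜 k f x (fun _ => y) = iteratedDeriv k (fun t : 𝕜 => f (x + t • y)) 0 := by
  have hline : (fun t : 𝕜 => f (x + t • y)) =
      (fun z => f (x + z)) ∘ ContinuousLinearMap.toSpanSingleton 𝕜 y := by
    ext t
    simp
  have hshift : ContDiff 𝕜 k fun z => f (x + z) := hf.comp (contDiff_const.add contDiff_id)
  rw [hline, iteratedDeriv_eq_iteratedFDeriv,
    ContinuousLinearMap.iteratedFDeriv_comp_right _ hshift _ le_rfl, iteratedFDeriv_comp_add_left]
  simp

lemma iteratedDeriv_eval {𝕜 : Type*} [NontriviallyNormedField 𝕜] (p : 𝕜[X]) (k : ℕ) :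
    iteratedDeriv k (fun t => p.eval t) = fun t => (derivative^[k] p).eval t := by
  induction k with
  | zero => simp
  | succ k ih =>
    ext t
    rw [iteratedDeriv_succ, ih, Polynomial.deriv, Function.iterate_succ_apply']

lemma factorial_mul_coeff_taylor {R : Type*} [CommSemiring R] (p : R[X]) (r : R) (k : ℕ) :
    k ! * (taylor r p).coeff k = (derivative^[k] p).eval r := by
  rw [taylor_coeff, ← factorial_smul_hasseDeriv, ← nsmul_eq_mul]
  exact (eval_smul _ _ _).symm

lemma factorial_mul_coeff_taylor_one_chebyshevT (n k : ℕ) :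
    k ! * (taylor 1 (Chebyshev.T ℝ n)).coeff k = chebTDerivOne n k :=
  factorial_mul_coeff_taylor _ _ _

variable {E : Type*} [NormedAddCommGroup E] [NormedSpace ℝ E] {n : ℕ} {P : E → ℝ}

theorem norm_iteratedFDeriv_apply_const_le (hP : IsPolynomialOfDegreeLE ℝ n P)
    (hPnorm : ∀ x, ‖x‖ ≤ 1 → |P x| ≤ 1) (k : ℕ) {x y : E} (hx : ‖x‖ ≤ 1) (hy : ‖y‖ ≤ 1) :
    ‖iteratedFDeriv ℝ k P x (fun _ => y)‖ ≤ chebTDerivOne n k := by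
  obtain ⟨F, hdeg, hF⟩ := hP.exists_mvPolynomial ![x, y]
  have hF (s t : ℝ) : MvPolynomial.eval ![s, t] F = P (s • x + t • y) := by
    simpa using hF ![s, t]
  have hcross : IsBoundedOnCross n F := ⟨hdeg, fun s t hst => by
    have hsmul (r : ℝ) {z : E} (hz : ‖z‖ ≤ 1) : ‖r • z‖ ≤ |r| :=
      (norm_smul r z).trans_le (mul_le_of_le_one_right (abs_nonneg r) hz)
    rw [hF]
    exact hPnorm _ ((norm_add_le_of_le (hsmul s hx) (hsmul t hy)).trans hst)⟩
  have hline : (fun t : ℝ => P (x + t • y)) = fun t => (verticalSlice 1 F).eval t := by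
    ext t
    rw [eval_verticalSlice, hF, one_smul]
  have hderiv : iteratedFDeriv ℝ k P x (fun _ => y) = k ! * (verticalSlice 1 F).coeff k := by
    rw [iteratedFDeriv_apply_const hP.contDiff, hline, congr_fun (iteratedDeriv_eval _ k) 0,
      ← factorial_mul_coeff_taylor, taylor_zero]
  rw [hderiv, norm_mul, Real.norm_natCast, Real.norm_eq_abs,
    ← factorial_mul_coeff_taylor_one_chebyshevT]
  gcongr
  exact hcross.isChebyshevDominated_verticalSlice.abs_coeff_le_coeff k

end PolynomialMaps

section Banach

section InnerProductSpace

variable {E G : Type*} [NormedAddCommGroup E] [InnerProductSpace ℝ E] [NormedAddCommGroup G]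
  [NormedSpace ℝ G] {u v : E}

lemma norm_mul_norm_add_sq_le_norm_apply_self {B : E →ₗ[ℝ] E →ₗ[ℝ] G}
    (hB : ∀ x y, B x y = B y x) (hu : ‖u‖ ≤ 1) (hv : ‖v‖ ≤ 1)
    (hdiag : ∀ z, ‖B z z‖ ≤ ‖B u v‖ * ‖z‖ ^ 2) :
    ‖B u v‖ * ‖u + v‖ ^ 2 ≤ ‖B (u + v) (u + v)‖ := by
  have hpolar : (4 : ℝ) • B u v = B (u + v) (u + v) - B (u - v) (u - v) := by
    simp only [map_add, map_sub, LinearMap.add_apply, LinearMap.sub_apply, hB v u]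
    module
  have hnorm : 4 * ‖B u v‖ ≤ ‖B (u + v) (u + v)‖ + ‖B u v‖ * ‖u - v‖ ^ 2 := by
    calc 4 * ‖B u v‖ = ‖B (u + v) (u + v) - B (u - v) (u - v)‖ := by
          rw [← hpolar, norm_smul, Real.norm_ofNat]
      _ ≤ _ := (norm_sub_le _ _).trans (by gcongr; exact hdiag _)
  have hpar : ‖u + v‖ ^ 2 + ‖u - v‖ ^ 2 ≤ 4 := by
    have := parallelogram_law_with_norm ℝ u v
    nlinarith [norm_nonneg u, norm_nonneg v]
  nlinarith [norm_nonneg (B u v)]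

lemma norm_add_lt_two_of_ne (hu : ‖u‖ ≤ 1) (hv : ‖v‖ ≤ 1) (huv : u ≠ v) : ‖u + v‖ < 2 := by
  have hpar := parallelogram_law_with_norm ℝ u v
  have hpos : 0 < ‖u - v‖ := norm_pos_iff.2 (sub_ne_zero.2 huv)
  nlinarith [norm_nonneg u, norm_nonneg v]

end InnerProductSpace

section Update

variable {ι : Type*} [DecidableEq ι]

lemma norm_update_le_one [Fintype ι] {E : Type*} [SeminormedAddGroup E] {y : ι → E} (hy : ‖y‖ ≤ 1)
    (i : ι) {w : E} (hw : ‖w‖ ≤ 1) : ‖Function.update y i w‖ ≤ 1 := by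
  rw [pi_norm_le_iff_of_nonneg zero_le_one] at hy ⊢
  exact (Function.forall_update_iff y fun _ z => ‖z‖ ≤ 1).2 ⟨hw, fun j _ => hy j⟩

lemma sum_update [Fintype ι] {M : Type*} [AddCommGroup M] (y : ι → M) (i : ι) (w : M) :
    ∑ j, Function.update y i w j = ∑ j, y j + (w - y i) := by
  rw [sum_update_of_mem (mem_univ i), ← add_sum_erase univ y (mem_univ i),
    sdiff_singleton_eq_erase]
  abel

variable {R M N : Type*} [CommSemiring R] [AddCommMonoid M] [Module R M] [AddCommMonoid N]
  [Module R N] (L : MultilinearMap R (fun _ : ι => M) N) (y : ι → M) {i j : ι}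

/-- The bilinear map obtained from `L` by leaving the `i`-th and `j`-th arguments free and fixing
the other arguments to be those of `y`. -/
def twoSlots (hij : i ≠ j) : M →ₗ[R] M →ₗ[R] N :=
  have hcomm (u v : M) : Function.update (Function.update y i u) j v =
      Function.update (Function.update y j v) i u := Function.update_comm hij u v y
  LinearMap.mk₂ R (fun u v => L (Function.update (Function.update y i u) j v))
    (fun u u' v => by simp only [hcomm, L.map_update_add])
    (fun c u v => by simp only [hcomm, L.map_update_smul])
    (fun u v v' => L.map_update_add _ _ _ _) (fun c u v => L.map_update_smul _ _ _ _)

lemma twoSlots_apply (hij : i ≠ j) (u v : M) :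
    twoSlots L y hij u v = L (Function.update (Function.update y i u) j v) := rfl

lemma twoSlots_apply_entries (hij : i ≠ j) : twoSlots L y hij (y i) (y j) = L y := by
  rw [twoSlots_apply, Function.update_eq_self, Function.update_eq_self]

variable {L} in
lemma twoSlots_comm (hL : ∀ v (σ : Equiv.Perm ι), L (v ∘ σ) = L v) (hij : i ≠ j) (u v : M) :
    twoSlots L y hij u v = twoSlots L y hij v u := by
  rw [twoSlots_apply, twoSlots_apply, ← hL _ (Equiv.swap i j)]
  congr 1
  ext k
  rcases eq_or_ne k i with rfl | hki
  · simp [hij]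
  rcases eq_or_ne k j with rfl | hkj
  · simp [hij]
  · simp [Equiv.swap_apply_of_ne_of_ne hki hkj, hki, hkj]

end Update

variable {ι E G : Type*} [Fintype ι] [NormedAddCommGroup E] [InnerProductSpace ℝ E]
  [NormedAddCommGroup G] [NormedSpace ℝ G] {L : ContinuousMultilinearMap ℝ (fun _ : ι => E) G}
  {y : ι → E}

/-- A point of the unit ball of `ι → E` at which `‖L‖` is maximal, and whose sum of entries is
longest among those maximum points. If `L` is symmetric, then the entries of `y` coincide: two
distinct ones could both be replaced by the normalization of their sum. -/
structure IsAlignedMax (L : ContinuousMultilinearMap ℝ (fun _ : ι => E) G) (y : ι → E) :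
    Prop where
  norm_le_one : ‖y‖ ≤ 1
  norm_apply_le : ∀ v, ‖v‖ ≤ 1 → ‖L v‖ ≤ ‖L y‖
  norm_sum_le : ∀ v, ‖v‖ ≤ 1 → ‖L y‖ ≤ ‖L v‖ → ‖∑ i, v i‖ ≤ ‖∑ i, y i‖

lemma exists_isAlignedMax [FiniteDimensional ℝ E]
    (L : ContinuousMultilinearMap ℝ (fun _ : ι => E) G) : ∃ y, IsAlignedMax L y := by
  have : ProperSpace (ι → E) := FiniteDimensional.proper ℝ _
  have hball : IsCompact (closedBall (0 : ι → E) 1) := isCompact_closedBall 0 1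
  obtain ⟨a, ha, hamax⟩ := hball.exists_isMaxOn ⟨0, by simp⟩ L.cont.norm.continuousOn
  have hmaxima : IsCompact (closedBall (0 : ι → E) 1 ∩ {v | ‖L a‖ ≤ ‖L v‖}) :=
    hball.inter_right (isClosed_le continuous_const L.cont.norm)
  obtain ⟨y, ⟨hy, hLy⟩, hymax⟩ := hmaxima.exists_isMaxOn ⟨a, ha, le_refl ‖L a‖⟩
    (f := fun v => ‖∑ i, v i‖) (by fun_prop)
  exact ⟨y, mem_closedBall_zero_iff.1 hy,
    fun v hv => (hamax (mem_closedBall_zero_iff.2 hv)).trans hLy,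
    fun v hv hLv => hymax ⟨mem_closedBall_zero_iff.2 hv, hLy.trans hLv⟩⟩

namespace IsAlignedMax

lemma norm_entry_le_one (hy : IsAlignedMax L y) (i : ι) : ‖y i‖ ≤ 1 :=
  (norm_le_pi_norm y i).trans hy.norm_le_one

lemma norm_sq_le_inner_sum (hy : IsAlignedMax L y) (i : ι) :
    ‖y i‖ ^ 2 ≤ inner ℝ (∑ j, y j) (y i) := by
  classical
  have hflip : L (Function.update y i (-y i)) = -L y := by
    rw [← neg_one_smul ℝ (y i), L.map_update_smul, Function.update_eq_self, neg_one_smul]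
  have hsum := hy.norm_sum_le _
    (norm_update_le_one hy.norm_le_one i ((norm_neg _).trans_le (hy.norm_entry_le_one i)))
    (by rw [hflip, norm_neg])
  have hsq := pow_le_pow_left₀ (norm_nonneg _) hsum 2
  rw [sum_update, ← neg_add', ← sub_eq_add_neg, ← two_smul ℝ (y i), norm_sub_sq_real,
    inner_smul_right, norm_smul, Real.norm_ofNat] at hsq
  linarith

lemma add_ne_zero (hy : IsAlignedMax L y) {i j : ι} (hij : y i ≠ y j) : y i + y j ≠ 0 := by
  intro h
  rw [add_eq_zero_iff_eq_neg] at h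
  have hi := hy.norm_sq_le_inner_sum i
  have hj := hy.norm_sq_le_inner_sum j
  rw [h, norm_neg, inner_neg_right] at hi
  have hzero : y j = 0 := norm_eq_zero.1 (by nlinarith [norm_nonneg (y j)])
  exact hij (by rw [h, hzero, neg_zero])

lemma norm_twoSlots_self_le [DecidableEq ι] (hy : IsAlignedMax L y) {i j : ι} (hij : i ≠ j)
    (z : E) : ‖twoSlots L.toMultilinearMap y hij z z‖ ≤ ‖L y‖ * ‖z‖ ^ 2 := by
  rcases eq_or_ne z 0 with rfl | hz
  · simp
  have hunit : ‖‖z‖⁻¹ • z‖ ≤ 1 := (norm_smul_inv_norm (𝕜 := ℝ) hz).le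
  have hmax : ‖twoSlots L.toMultilinearMap y hij (‖z‖⁻¹ • z) (‖z‖⁻¹ • z)‖ ≤ ‖L y‖ :=
    hy.norm_apply_le _ (norm_update_le_one (norm_update_le_one hy.norm_le_one i hunit) j hunit)
  rw [map_smul, map_smul, LinearMap.smul_apply, norm_smul, norm_smul, norm_inv,
    norm_norm] at hmax
  calc ‖twoSlots L.toMultilinearMap y hij z z‖
      = ‖z‖⁻¹ * (‖z‖⁻¹ * ‖twoSlots L.toMultilinearMap y hij z z‖) * ‖z‖ ^ 2 := by
        field_simp
    _ ≤ ‖L y‖ * ‖z‖ ^ 2 := by gcongr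

lemma norm_apply_le_update_update [DecidableEq ι] (hy : IsAlignedMax L y)
    (hL : ∀ v (σ : Equiv.Perm ι), L (v ∘ σ) = L v) {i j : ι} (hij : i ≠ j) {w : E}
    (hsum : y i + y j ≠ 0) (hw : y i + y j = ‖y i + y j‖ • w) :
    ‖L y‖ ≤ ‖L (Function.update (Function.update y i w) j w)‖ := by
  have hpolar := norm_mul_norm_add_sq_le_norm_apply_self (twoSlots_comm y hL hij)
    (hy.norm_entry_le_one i) (hy.norm_entry_le_one j)
    (by simpa only [twoSlots_apply_entries, L.coe_coe] using hy.norm_twoSlots_self_le hij)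
  have hscale : ‖twoSlots L.toMultilinearMap y hij (y i + y j) (y i + y j)‖ =
      ‖twoSlots L.toMultilinearMap y hij w w‖ * ‖y i + y j‖ ^ 2 := by
    conv_lhs => rw [hw, map_smul, map_smul, LinearMap.smul_apply, norm_smul, norm_smul, norm_norm]
    ring
  rw [twoSlots_apply_entries, hscale] at hpolar
  exact le_of_mul_le_mul_right hpolar (by positivity)

theorem apply_eq_apply (hy : IsAlignedMax L y) (hL : ∀ v (σ : Equiv.Perm ι), L (v ∘ σ) = L v)
    (i j : ι) : y i = y j := by
  classical
  by_contra hne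
  have hij : i ≠ j := ne_of_apply_ne y hne
  obtain ⟨p, hp⟩ : ∃ p, p = y i + y j := ⟨_, rfl⟩
  have hp0 : p ≠ 0 := hp ▸ hy.add_ne_zero hne
  have hppos : 0 < ‖p‖ := norm_pos_iff.2 hp0
  have hunit : ‖‖p‖⁻¹ • p‖ ≤ 1 := (norm_smul_inv_norm (𝕜 := ℝ) hp0).le
  have hlonger := hy.norm_sum_le _
    (norm_update_le_one (norm_update_le_one hy.norm_le_one i hunit) j hunit)
    (hy.norm_apply_le_update_update hL hij (hp ▸ hp0)
      (by rw [← hp, smul_inv_smul₀ hppos.ne']))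
  have hc : 0 < 2 * ‖p‖⁻¹ - 1 := by
    have := norm_add_lt_two_of_ne (hy.norm_entry_le_one i) (hy.norm_entry_le_one j) hne
    rw [← hp] at this
    rw [sub_pos, ← div_eq_mul_inv, one_lt_div hppos]
    exact this
  have hsum : ∑ k, Function.update (Function.update y i (‖p‖⁻¹ • p)) j (‖p‖⁻¹ • p) k =
      ∑ k, y k + (2 * ‖p‖⁻¹ - 1) • p := by
    rw [sum_update, sum_update, Function.update_of_ne hij.symm]
    linear_combination (norm := module) hp
  have hinner : 0 ≤ inner ℝ (∑ k, y k) p := by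
    rw [hp, inner_add_right]
    exact add_nonneg ((sq_nonneg _).trans (hy.norm_sq_le_inner_sum i))
      ((sq_nonneg _).trans (hy.norm_sq_le_inner_sum j))
  have hsq := pow_le_pow_left₀ (norm_nonneg _) hlonger 2
  rw [hsum, norm_add_sq_real, inner_smul_right, norm_smul, mul_pow, Real.norm_of_nonneg hc.le]
    at hsq
  have := mul_nonneg hc.le hinner
  have : 0 < (2 * ‖p‖⁻¹ - 1) ^ 2 * ‖p‖ ^ 2 := by positivity
  linarith

end IsAlignedMax

lemma exists_norm_apply_le_norm_apply_const_of_finiteDimensional [FiniteDimensional ℝ E]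
    (hL : ∀ v (σ : Equiv.Perm ι), L (v ∘ σ) = L v) :
    ∃ z : E, ‖z‖ ≤ 1 ∧ ∀ v, ‖v‖ ≤ 1 → ‖L v‖ ≤ ‖L fun _ => z‖ := by
  obtain ⟨y, hy⟩ := exists_isAlignedMax L
  rcases isEmpty_or_nonempty ι with _ | ⟨⟨i⟩⟩
  · exact ⟨0, by simp, fun v _ => (congrArg (‖L ·‖) (Subsingleton.elim v fun _ => 0)).le⟩
  · have hconst : y = fun _ => y i := funext fun j => hy.apply_eq_apply hL j i
    exact ⟨y i, hy.norm_entry_le_one i, fun v hv => hconst ▸ hy.norm_apply_le v hv⟩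

lemma exists_norm_apply_le_norm_apply_const (hL : ∀ v (σ : Equiv.Perm ι), L (v ∘ σ) = L v)
    {v : ι → E} (hv : ‖v‖ ≤ 1) : ∃ z : E, ‖z‖ ≤ 1 ∧ ‖L v‖ ≤ ‖L fun _ => z‖ := by
  let F : Submodule ℝ E := Submodule.span ℝ (Set.range v)
  have : FiniteDimensional ℝ F := FiniteDimensional.span_of_finite ℝ (Set.finite_range v)
  obtain ⟨z, hz, hmax⟩ := exists_norm_apply_le_norm_apply_const_of_finiteDimensional
    (L := L.compContinuousLinearMap fun _ => F.subtypeL) fun v σ => hL (fun i => v i) σ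
  exact ⟨z, hz, hmax (fun i => ⟨v i, Submodule.subset_span ⟨i, rfl⟩⟩) hv⟩

theorem norm_eq_sSup_norm_apply_const (hL : ∀ v (σ : Equiv.Perm ι), L (v ∘ σ) = L v) :
    ‖L‖ = sSup ((fun z => ‖L fun _ => z‖) '' closedBall (0 : E) 1) := by
  have hle : ∀ b ∈ (fun z => ‖L fun _ => z‖) '' closedBall (0 : E) 1, b ≤ ‖L‖ := by
    rintro _ ⟨z, hz, rfl⟩
    exact L.unit_le_opNorm
      ((pi_norm_le_iff_of_nonneg zero_le_one).2 fun _ => mem_closedBall_zero_iff.1 hz)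
  have hnonneg : 0 ≤ sSup ((fun z => ‖L fun _ => z‖) '' closedBall (0 : E) 1) :=
    Real.sSup_nonneg (by rintro _ ⟨z, -, rfl⟩; exact norm_nonneg _)
  refine le_antisymm (L.opNorm_le_bound hnonneg fun m => ?_) (csSup_le ⟨_, 0, by simp, rfl⟩ hle)
  by_cases hm : ∃ i, m i = 0
  · obtain ⟨i, hi⟩ := hm
    rw [L.map_coord_zero i hi, norm_zero]
    positivity
  push Not at hm
  have hunit : ‖fun i => ‖m i‖⁻¹ • m i‖ ≤ 1 := (pi_norm_le_iff_of_nonneg zero_le_one).2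
    fun i => (norm_smul_inv_norm (𝕜 := ℝ) (hm i)).le
  obtain ⟨z, hz, hzmax⟩ := exists_norm_apply_le_norm_apply_const hL hunit
  calc ‖L m‖ = ‖L fun i => ‖m i‖⁻¹ • m i‖ * ∏ i, ‖m i‖ := by
        rw [L.map_smul_univ, norm_smul, prod_inv_distrib, norm_inv, Real.norm_of_nonneg
          (prod_nonneg fun _ _ => norm_nonneg _), mul_right_comm,
          inv_mul_cancel₀ (prod_ne_zero_iff.2 fun i _ => norm_ne_zero_iff.2 (hm i)), one_mul]
    _ ≤ _ := by
        gcongr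
        exact hzmax.trans (le_csSup ⟨_, hle⟩ ⟨z, mem_closedBall_zero_iff.2 hz, rfl⟩)

end Banach

theorem markov_hilbert_general
    {H : Type*} [NormedAddCommGroup H] [InnerProductSpace ℝ H] (n k : ℕ) (P : H → ℝ)
    (hP : IsPolynomialOfDegreeLE ℝ n P) (hPnorm : ∀ x : H, ‖x‖ ≤ 1 → |P x| ≤ 1)
    (x : H) (hx : ‖x‖ ≤ 1) :
    ‖iteratedFDeriv ℝ k P x‖
        = sSup ((fun y => ‖iteratedFDeriv ℝ k P x (fun _ => y)‖) '' closedBall (0 : H) 1) ∧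
      sSup ((fun y => ‖iteratedFDeriv ℝ k P x (fun _ => y)‖) '' closedBall (0 : H) 1)
        ≤ chebTDerivOne n k ∧
      chebTDerivOne n k
        = (∏ i ∈ range k, ((n : ℝ) ^ 2 - (i : ℝ) ^ 2)) /
            (∏ i ∈ range k, (2 * (i : ℝ) + 1)) := by
  refine ⟨norm_eq_sSup_norm_apply_const fun v σ =>
    hP.contDiff.contDiffAt.iteratedFDeriv_comp_perm v σ, csSup_le ⟨_, 0, by simp, rfl⟩ ?_, ?_⟩
  · rintro _ ⟨y, hy, rfl⟩
    exact norm_iteratedFDeriv_apply_const_le hP hPnorm k hx (mem_closedBall_zero_iff.1 hy)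
  · rw [chebTDerivOne, Chebyshev.iterate_derivative_T_eval_one_eq_div]
    push_cast
    rfl

/-- V. A. Markov's theorem on a real Hilbert space: if `P` is a continuous polynomial of
degree at most `n` with `‖P‖ ≤ 1` and `1 ≤ k ≤ n`, then for every `‖x‖ ≤ 1`,
`‖D^k P(x)‖ = ‖D̂^k P(x)‖ ≤ T_n^{(k)}(1) = n²(n²-1²)⋯(n²-(k-1)²)/(1·3⋯(2k-1))`. -/
theorem markov_hilbert
    {H : Type*} [NormedAddCommGroup H] [InnerProductSpace ℝ H] [CompleteSpace H]
    (n k : ℕ) (hk1 : 1 ≤ k) (hkn : k ≤ n) (P : H → ℝ)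
    (hP : ∃ L : (j : Fin (n + 1)) → ContinuousMultilinearMap ℝ (fun _ : Fin (j : ℕ) => H) ℝ,
      ∀ x, P x = ∑ j, L j (fun _ => x))
    (hPnorm : ∀ x : H, ‖x‖ ≤ 1 → |P x| ≤ 1)
    (x : H) (hx : ‖x‖ ≤ 1) :
    ‖iteratedFDeriv ℝ k P x‖
        = sSup ((fun y => ‖iteratedFDeriv ℝ k P x (fun _ => y)‖) '' closedBall (0 : H) 1) ∧
      sSup ((fun y => ‖iteratedFDeriv ℝ k P x (fun _ => y)‖) '' closedBall (0 : H) 1)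
        ≤ chebTDerivOne n k ∧
      chebTDerivOne n k
        = (∏ i ∈ Finset.range k, ((n : ℝ) ^ 2 - (i : ℝ) ^ 2)) /
            (∏ i ∈ Finset.range k, (2 * (i : ℝ) + 1)) :=
  markov_hilbert_general n k P hP hPnorm x hx
end
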